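/- arXiv:1705.07039 — 17 statements merged into one kernel-verified Lean document; each statement's English description precedes it below -/
import Mathlib

section
/- Let p be a nonzero real number. The metric α_p on X∖{0} is consistent with the norm metric α_1[x,y] = ‖x − y‖: for every sequence (x_n) in X∖{0} and every x ∈ X∖{0}, ‖x_n − x‖ → 0 as n → ∞ if and only if α_p[x_n, x] → 0 as n → ∞. -/
/-- The `p`-angular distance `α_p[x,y] = ‖‖x‖^(p-1) • x - ‖y‖^(p-1) • y‖`. -/
noncomputable def alphaD {X : Type*} [NormedAddCommGroup X] [NormedSpace ℝ X]
    (p : ℝ) (x y : X) : ℝ :=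
  ‖(‖x‖ ^ (p - 1)) • x - (‖y‖ ^ (p - 1)) • y‖

theorem angMap_tendsto {X : Type*} [NormedAddCommGroup X] [NormedSpace ℝ X]
    (q : ℝ) (u : ℕ → X) (x : X) (hx : x ≠ 0)
    (h : Filter.Tendsto u Filter.atTop (nhds x)) :
    Filter.Tendsto (fun n => (‖u n‖ ^ (q - 1)) • u n) Filter.atTop
      (nhds ((‖x‖ ^ (q - 1)) • x)) :=
  (h.norm.rpow_const (Or.inl (norm_ne_zero_iff.2 hx))).smul h

theorem angMap_inv {X : Type*} [NormedAddCommGroup X] [NormedSpace ℝ X]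
    (p : ℝ) (hp : p ≠ 0) (x : X) (hx : x ≠ 0) :
    (‖(‖x‖ ^ (p - 1)) • x‖ ^ (p⁻¹ - 1)) • ((‖x‖ ^ (p - 1)) • x) = x := by
  have h0 : 0 < ‖x‖ := norm_pos_iff.2 hx
  have h1 : ‖(‖x‖ ^ (p - 1)) • x‖ = ‖x‖ ^ p := by
    rw [norm_smul, Real.norm_of_nonneg (Real.rpow_nonneg h0.le _),
      Real.rpow_sub_one h0.ne']
    field_simp
  rw [h1, smul_smul, ← Real.rpow_mul h0.le, ← Real.rpow_add h0]
  have : p * (p⁻¹ - 1) + (p - 1) = 0 := by field_simp; ring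
  rw [this, Real.rpow_zero, one_smul]

theorem stmt_1 {X : Type*} [NormedAddCommGroup X] [NormedSpace ℝ X]
    (p : ℝ) (hp : p ≠ 0) (u : ℕ → X) (hu : ∀ n, u n ≠ 0) (x : X) (hx : x ≠ 0) :
    Filter.Tendsto (fun n => ‖u n - x‖) Filter.atTop (nhds 0) ↔
      Filter.Tendsto (fun n => alphaD p (u n) x) Filter.atTop (nhds 0) := by
  unfold alphaD
  rw [← tendsto_iff_norm_sub_tendsto_zero,
    ← tendsto_iff_norm_sub_tendsto_zero (f := fun n => (‖u n‖ ^ (p - 1)) • u n)]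
  refine ⟨angMap_tendsto p u x hx, fun h => ?_⟩
  have hne : (‖x‖ ^ (p - 1)) • x ≠ 0 :=
    smul_ne_zero (Real.rpow_pos_of_pos (norm_pos_iff.2 hx) _).ne' hx
  have := angMap_tendsto p⁻¹ _ _ hne h
  rw [angMap_inv p hp x hx] at this
  exact this.congr fun n => angMap_inv p hp (u n) (hu n)
end

section
/- Let X be a nonzero real normed linear space and let p, q be distinct nonzero real numbers. Then α_p is not equivalent to α_q: there is no constant M > 0 such that α_p[x,y] ≤ M·α_q[x,y] for all nonzero x, y ∈ X. -/
theorem alphaD_neg_aux {X : Type*} [NormedAddCommGroup X] [NormedSpace ℝ X]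
    (p : ℝ) (x : X) (hx : x ≠ 0) : alphaD p x (-x) = 2 * ‖x‖ ^ p := by
  have h0 : 0 < ‖x‖ := norm_pos_iff.mpr hx
  have h1 : (‖x‖ ^ (p - 1)) • x - (‖-x‖ ^ (p - 1)) • (-x) = (2 * ‖x‖ ^ (p - 1)) • x := by
    rw [norm_neg, smul_neg, sub_neg_eq_add, ← add_smul, two_mul]
  unfold alphaD
  rw [h1, norm_smul, Real.norm_of_nonneg (by positivity), mul_assoc,
    Real.rpow_sub_one h0.ne', div_mul_cancel₀ _ h0.ne']

theorem stmt_2 {X : Type*} [NormedAddCommGroup X] [NormedSpace ℝ X] [Nontrivial X]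
    (p q : ℝ) (hp : p ≠ 0) (hq : q ≠ 0) (hpq : p ≠ q) :
    ¬ ∃ M > (0 : ℝ), ∀ x y : X, x ≠ 0 → y ≠ 0 → alphaD p x y ≤ M * alphaD q x y := by
  rintro ⟨M, hM, h⟩
  have hs : 0 < (M + 1) ^ (p - q)⁻¹ := by positivity
  obtain ⟨x, hx⟩ := NormedSpace.exists_lt_norm ℝ X 0
  obtain ⟨y, hy⟩ : ∃ y : X, ‖y‖ = (M + 1) ^ (p - q)⁻¹ := by
    refine ⟨((M + 1) ^ (p - q)⁻¹ / ‖x‖) • x, ?_⟩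
    rw [norm_smul, Real.norm_of_nonneg (by positivity), div_mul_cancel₀ _ hx.ne']
  have hy0 : 0 < ‖y‖ := hy ▸ hs
  have hne : y ≠ 0 := norm_pos_iff.mp hy0
  have h2 := h y (-y) hne (neg_ne_zero.mpr hne)
  rw [alphaD_neg_aux p y hne, alphaD_neg_aux q y hne] at h2
  have h3 : ‖y‖ ^ p = (M + 1) * ‖y‖ ^ q := by
    have : ‖y‖ ^ (p - q) = M + 1 := by
      rw [hy, Real.rpow_inv_rpow (by positivity) (sub_ne_zero.mpr hpq)]
    rw [← this, ← Real.rpow_add hy0, sub_add_cancel]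
  have h4 : 0 < ‖y‖ ^ q := by positivity
  nlinarith
end

section
/- Let X be a nonzero real normed linear space and let p be a real number with p ≠ 1. Then the skew p-angular distance β_p is not a metric on X∖{0}: there exist nonzero x, y, z ∈ X with β_p[x,y] > β_p[x,z] + β_p[y,z]. -/
/-- The skew `p`-angular distance `β_p[x,y] = ‖‖y‖^(p-1) • x - ‖x‖^(p-1) • y‖`. -/
noncomputable def betaD {X : Type*} [NormedAddCommGroup X] [NormedSpace ℝ X]
    (p : ℝ) (x y : X) : ℝ :=
  ‖(‖y‖ ^ (p - 1)) • x - (‖x‖ ^ (p - 1)) • y‖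

lemma betaD_line {X : Type*} [NormedAddCommGroup X] [NormedSpace ℝ X]
    (p : ℝ) (e : X) (he : ‖e‖ = 1) (a b : ℝ) :
    betaD p (a • e) (b • e) = |(|b| ^ (p - 1)) * a - (|a| ^ (p - 1)) * b| := by
  unfold betaD
  rw [norm_smul, norm_smul, he, smul_smul, smul_smul, ← sub_smul, norm_smul, he]
  simp

theorem stmt_3 {X : Type*} [NormedAddCommGroup X] [NormedSpace ℝ X] [Nontrivial X]
    (p : ℝ) (hp : p ≠ 1) :
    ∃ x y z : X, x ≠ 0 ∧ y ≠ 0 ∧ z ≠ 0 ∧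
      betaD p x z + betaD p y z < betaD p x y := by
  obtain ⟨v, hv⟩ := exists_ne (0 : X)
  obtain ⟨e, he⟩ : ∃ e : X, ‖e‖ = 1 := ⟨(‖v‖⁻¹) • v, by
    rw [norm_smul, norm_inv, norm_norm, inv_mul_cancel₀ (norm_ne_zero_iff.mpr hv)]⟩
  have he0 : e ≠ 0 := by
    rintro rfl
    simp at he
  suffices h : ∃ b : ℝ, 0 < b ∧
      |((1/2 : ℝ) ^ (p - 1)) * 1 - 1 * (1/2)| + (((1/2 : ℝ) ^ (p - 1)) * b + b ^ (p - 1) * (1/2))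
        < b ^ (p - 1) + b by
    obtain ⟨b, hb, h⟩ := h
    refine ⟨(1 : ℝ) • e, (-b) • e, (1/2 : ℝ) • e, smul_ne_zero (by norm_num) he0,
      smul_ne_zero (by linarith) he0, smul_ne_zero (by norm_num) he0, ?_⟩
    rw [betaD_line p e he, betaD_line p e he, betaD_line p e he, abs_neg, abs_of_pos hb,
      abs_one, Real.one_rpow, abs_of_pos (show (0 : ℝ) < 1/2 by norm_num)]
    have hB : 0 < b ^ (p - 1) := Real.rpow_pos_of_pos hb _
    have hC : 0 < (1/2 : ℝ) ^ (p - 1) := Real.rpow_pos_of_pos (by norm_num) _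
    rw [show (1/2 : ℝ) ^ (p - 1) * -b - b ^ (p - 1) * (1/2)
        = -((1/2 : ℝ) ^ (p - 1) * b + b ^ (p - 1) * (1/2)) by ring, abs_neg,
      abs_of_pos (show 0 < (1/2 : ℝ) ^ (p - 1) * b + b ^ (p - 1) * (1/2) by positivity),
      show b ^ (p - 1) * 1 - 1 * -b = b ^ (p - 1) + b by ring,
      abs_of_pos (show 0 < b ^ (p - 1) + b by positivity)]
    exact h
  rcases lt_or_gt_of_ne hp with hp | hp
  · have hq : p - 1 < 0 := by linarith
    have hC : 1 < (1/2 : ℝ) ^ (p - 1) :=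
      Real.one_lt_rpow_of_pos_of_lt_one_of_neg (by norm_num) (by norm_num) hq
    set C := (1/2 : ℝ) ^ (p - 1)
    have hb0 : 0 < (4 * C) ^ (p - 1)⁻¹ := Real.rpow_pos_of_pos (by linarith) _
    have hb1 : (4 * C) ^ (p - 1)⁻¹ < 1 :=
      Real.rpow_lt_one_of_one_lt_of_neg (by linarith) (inv_lt_zero.mpr hq)
    refine ⟨(4 * C) ^ (p - 1)⁻¹, hb0, ?_⟩
    rw [Real.rpow_inv_rpow (by linarith) hq.ne, abs_of_pos (by linarith)]
    nlinarith
  · have hC : (1/2 : ℝ) ^ (p - 1) < 1 :=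
      Real.rpow_lt_one (by norm_num) (by norm_num) (by linarith)
    refine ⟨1, one_pos, ?_⟩
    rw [Real.one_rpow]
    rcases abs_cases ((1/2 : ℝ) ^ (p - 1) * 1 - 1 * (1/2)) with h | h <;> linarith [h.1]
end

section
/- Let p be a positive real number and let A be a nonempty subset of X∖{0} that is complete with respect to the metric α_p (every sequence in A that is Cauchy with respect to α_p converges, with respect to α_p, to an element of A). Then A is norm-bounded from below: there exists c > 0 such that ‖a‖ ≥ c for all a ∈ A. Dually, if p < 0 and A is α_p-complete, then A is norm-bounded from above: there exists C > 0 such that ‖a‖ ≤ C for all a ∈ A. -/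
/-- A set `A` is complete with respect to the metric `α_p`: every sequence in `A`
that is Cauchy with respect to `α_p` converges, with respect to `α_p`, to a point of `A`. -/
def AlphaComplete {X : Type*} [NormedAddCommGroup X] [NormedSpace ℝ X]
    (p : ℝ) (A : Set X) : Prop :=
  ∀ u : ℕ → X, (∀ n, u n ∈ A) →
    (∀ ε > (0 : ℝ), ∃ N : ℕ, ∀ m ≥ N, ∀ n ≥ N, alphaD p (u m) (u n) < ε) →
    ∃ a ∈ A, Filter.Tendsto (fun n => alphaD p (u n) a) Filter.atTop (nhds 0)

theorem norm_aux_stmt4 {X : Type*} [NormedAddCommGroup X] [NormedSpace ℝ X]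
    (p : ℝ) (x : X) (hx : x ≠ 0) : ‖(‖x‖ ^ (p - 1)) • x‖ = ‖x‖ ^ p := by
  have h : 0 < ‖x‖ := norm_pos_iff.mpr hx
  rw [norm_smul, Real.norm_of_nonneg (Real.rpow_nonneg h.le _), Real.rpow_sub_one h.ne']
  field_simp

theorem key_aux_stmt4 {X : Type*} [NormedAddCommGroup X] [NormedSpace ℝ X]
    (p : ℝ) (A : Set X) (hA0 : ∀ a ∈ A, a ≠ 0)
    (hcomp : AlphaComplete p A) : ∃ d > (0 : ℝ), ∀ a ∈ A, d ≤ ‖a‖ ^ p := by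
  by_contra! hcon
  have h1 : ∀ n : ℕ, ∃ a ∈ A, ‖a‖ ^ p < 1 / ((n : ℝ) + 1) :=
    fun n => hcon _ Nat.one_div_pos_of_nat
  choose u huA hu using h1
  have h0 : Filter.Tendsto (fun n => (‖u n‖ ^ (p - 1)) • u n) Filter.atTop (nhds 0) := by
    refine squeeze_zero_norm (fun n => ?_) (tendsto_one_div_add_atTop_nhds_zero_nat (𝕜 := ℝ))
    rw [norm_aux_stmt4 p _ (hA0 _ (huA n))]
    exact (hu n).le
  obtain ⟨a, haA, ha⟩ := hcomp u huA (by
    intro ε hε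
    obtain ⟨N, hN⟩ := Metric.cauchySeq_iff.mp h0.cauchySeq ε hε
    refine ⟨N, fun m hm n hn => ?_⟩
    have := hN m hm n hn
    rwa [dist_eq_norm] at this)
  have h2 : Filter.Tendsto (fun n => (‖u n‖ ^ (p - 1)) • u n) Filter.atTop
      (nhds ((‖a‖ ^ (p - 1)) • a)) := tendsto_iff_norm_sub_tendsto_zero.mpr ha
  have h3 := tendsto_nhds_unique h2 h0
  have h4 := norm_aux_stmt4 p a (hA0 a haA)
  rw [h3, norm_zero] at h4
  exact (Real.rpow_pos_of_pos (norm_pos_iff.mpr (hA0 a haA)) p).ne h4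

theorem stmt_4 {X : Type*} [NormedAddCommGroup X] [NormedSpace ℝ X]
    (p : ℝ) (A : Set X) (hA : A.Nonempty) (hA0 : ∀ a ∈ A, a ≠ 0)
    (hcomp : AlphaComplete p A) :
    (0 < p → ∃ c > (0 : ℝ), ∀ a ∈ A, c ≤ ‖a‖) ∧
    (p < 0 → ∃ C > (0 : ℝ), ∀ a ∈ A, ‖a‖ ≤ C) := by
  obtain ⟨d, hd, h⟩ := key_aux_stmt4 p A hA0 hcomp
  refine ⟨fun hp => ⟨d ^ p⁻¹, Real.rpow_pos_of_pos hd _, fun a ha => ?_⟩,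
    fun hp => ⟨d ^ p⁻¹, Real.rpow_pos_of_pos hd _, fun a ha => ?_⟩⟩
  · exact (Real.rpow_inv_le_iff_of_pos hd.le (norm_nonneg a) hp).mpr (h a ha)
  · exact (Real.le_rpow_inv_iff_of_neg (norm_pos_iff.mpr (hA0 a ha)) hd hp).mpr (h a ha)
end

section
/- Let p, q be real numbers with q ≠ 0. Then for all nonzero x, y ∈ X, (|p|/(|p| + |p − q|)) · min(‖x‖^(p−q), ‖y‖^(p−q)) · α_q[x,y] ≤ α_p[x,y] ≤ ((|q| + |p − q|)/|q|) · max(‖x‖^(p−q), ‖y‖^(p−q)) · α_q[x,y]. -/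
theorem exp_aux (s t : ℝ) : |Real.exp s - Real.exp t| ≤ max (Real.exp s) (Real.exp t) * |s - t| := by
  have key : ∀ s t : ℝ, t ≤ s →
      |Real.exp s - Real.exp t| ≤ max (Real.exp s) (Real.exp t) * |s - t| := by
    intro s t h
    have h1 := Real.exp_le_exp.2 h
    rw [max_eq_left h1, abs_of_nonneg (by linarith), abs_of_nonneg (by linarith)]
    have h2 := Real.add_one_le_exp (t - s)
    have h3 : Real.exp t = Real.exp s * Real.exp (t - s) := by
      rw [← Real.exp_add]; ring_nf
    have := Real.exp_pos s
    rw [h3]; nlinarith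
  rcases le_total t s with h | h
  · exact key s t h
  · rw [abs_sub_comm, max_comm, abs_sub_comm s t]; exact key t s h

theorem exp_aux2 (s t : ℝ) (h : t ≤ s) : Real.exp t * |s - t| ≤ |Real.exp s - Real.exp t| := by
  have h1 := Real.exp_le_exp.2 h
  rw [abs_of_nonneg (by linarith), abs_of_nonneg (by linarith)]
  have h2 := Real.add_one_le_exp (s - t)
  have h3 : Real.exp s = Real.exp t * Real.exp (s - t) := by
    rw [← Real.exp_add]; ring_nf
  have := Real.exp_pos t
  rw [h3]; nlinarith

theorem norm_aux {X : Type*} [NormedAddCommGroup X] [NormedSpace ℝ X]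
    (q : ℝ) (x : X) (hx : x ≠ 0) : ‖(‖x‖ ^ (q - 1)) • x‖ = ‖x‖ ^ q := by
  have h : 0 < ‖x‖ := norm_pos_iff.2 hx
  rw [norm_smul, Real.norm_of_nonneg (by positivity), Real.rpow_sub_one h.ne']
  field_simp

theorem upper_aux {X : Type*} [NormedAddCommGroup X] [NormedSpace ℝ X]
    (p q : ℝ) (hq : q ≠ 0) (x y : X) (hx : x ≠ 0) (hy : y ≠ 0) (hxy : ‖y‖ ^ q ≤ ‖x‖ ^ q) :
    alphaD p x y ≤
      ((|q| + |p - q|) / |q|) * max (‖x‖ ^ (p - q)) (‖y‖ ^ (p - q)) * alphaD q x y := by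
  have ha : 0 < ‖x‖ := norm_pos_iff.2 hx
  have hb : 0 < ‖y‖ := norm_pos_iff.2 hy
  have hq' : 0 < |q| := abs_pos.2 hq
  have h1 : |‖x‖ ^ q - ‖y‖ ^ q| ≤ alphaD q x y := by
    have := abs_norm_sub_norm_le ((‖x‖ ^ (q - 1)) • x) ((‖y‖ ^ (q - 1)) • y)
    rwa [norm_aux q x hx, norm_aux q y hy] at this
  have h2 : alphaD p x y ≤ ‖x‖ ^ (p - q) * alphaD q x y
      + |‖x‖ ^ (p - q) - ‖y‖ ^ (p - q)| * ‖y‖ ^ q := by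
    have e : (‖x‖ ^ (p - 1)) • x - (‖y‖ ^ (p - 1)) • y
        = (‖x‖ ^ (p - q)) • ((‖x‖ ^ (q - 1)) • x - (‖y‖ ^ (q - 1)) • y)
          + (‖x‖ ^ (p - q) - ‖y‖ ^ (p - q)) • ((‖y‖ ^ (q - 1)) • y) := by
      have e1 : ‖x‖ ^ (p - 1) = ‖x‖ ^ (p - q) * ‖x‖ ^ (q - 1) := by
        rw [← Real.rpow_add ha]; ring_nf
      have e2 : ‖y‖ ^ (p - 1) = ‖y‖ ^ (p - q) * ‖y‖ ^ (q - 1) := by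
        rw [← Real.rpow_add hb]; ring_nf
      rw [e1, e2]; module
    unfold alphaD
    rw [e]
    refine (norm_add_le _ _).trans (le_of_eq ?_)
    rw [norm_smul, norm_smul _ ((‖y‖ ^ (q - 1)) • y), norm_aux q y hy,
      Real.norm_of_nonneg (by positivity : 0 ≤ ‖x‖ ^ (p - q)), Real.norm_eq_abs]
  have h3 := exp_aux (Real.log ‖x‖ * (p - q)) (Real.log ‖y‖ * (p - q))
  have h4 := exp_aux2 (Real.log ‖x‖ * q) (Real.log ‖y‖ * q) (by
    rwa [← Real.exp_le_exp, ← Real.rpow_def_of_pos ha, ← Real.rpow_def_of_pos hb])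
  rw [← Real.rpow_def_of_pos ha, ← Real.rpow_def_of_pos hb, ← sub_mul, abs_mul] at h3 h4
  have hM := le_max_left (‖x‖ ^ (p - q)) (‖y‖ ^ (p - q))
  have hA : 0 ≤ alphaD q x y := norm_nonneg _
  have hX : 0 < ‖x‖ ^ (p - q) := by positivity
  have hY : 0 < ‖y‖ ^ q := by positivity
  set M := max (‖x‖ ^ (p - q)) (‖y‖ ^ (p - q))
  set A := alphaD q x y
  set L := |Real.log ‖x‖ - Real.log ‖y‖|
  have h5 : ‖y‖ ^ q * L ≤ A / |q| := by
    rw [le_div_iff₀ hq']; nlinarith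
  calc _ ≤ _ := h2
    _ ≤ M * A + (M * (L * |p - q|)) * ‖y‖ ^ q := by gcongr
    _ = M * A + M * |p - q| * (‖y‖ ^ q * L) := by ring
    _ ≤ M * A + M * |p - q| * (A / |q|) := by
      have : 0 ≤ M := hX.le.trans hM
      gcongr
    _ = _ := by field_simp

theorem upper_aux2 {X : Type*} [NormedAddCommGroup X] [NormedSpace ℝ X]
    (p q : ℝ) (hq : q ≠ 0) (x y : X) (hx : x ≠ 0) (hy : y ≠ 0) :
    alphaD p x y ≤
      ((|q| + |p - q|) / |q|) * max (‖x‖ ^ (p - q)) (‖y‖ ^ (p - q)) * alphaD q x y := by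
  have hs : ∀ r, alphaD r x y = alphaD r y x := fun r => norm_sub_rev _ _
  rcases le_total (‖y‖ ^ q) (‖x‖ ^ q) with h | h
  · exact upper_aux p q hq x y hx hy h
  · rw [hs, hs, max_comm]; exact upper_aux p q hq y x hy hx h

theorem stmt_5 {X : Type*} [NormedAddCommGroup X] [NormedSpace ℝ X]
    (p q : ℝ) (hq : q ≠ 0) (x y : X) (hx : x ≠ 0) (hy : y ≠ 0) :
    (|p| / (|p| + |p - q|)) * min (‖x‖ ^ (p - q)) (‖y‖ ^ (p - q)) * alphaD q x y
      ≤ alphaD p x y ∧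
    alphaD p x y ≤
      ((|q| + |p - q|) / |q|) * max (‖x‖ ^ (p - q)) (‖y‖ ^ (p - q)) * alphaD q x y := by
  refine ⟨?_, upper_aux2 p q hq x y hx hy⟩
  have hA : 0 ≤ alphaD p x y := norm_nonneg _
  by_cases hp : p = 0
  · subst hp; simpa using hA
  have ha : 0 < ‖x‖ := norm_pos_iff.2 hx
  have hb : 0 < ‖y‖ := norm_pos_iff.2 hy
  have hp' : 0 < |p| := abs_pos.2 hp
  have h := upper_aux2 q p hp x y hx hy
  have hX : 0 < ‖x‖ ^ (p - q) := by positivity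
  have hY : 0 < ‖y‖ ^ (p - q) := by positivity
  rw [abs_sub_comm q p, ← neg_sub p q, Real.rpow_neg ha.le, Real.rpow_neg hb.le] at h
  have hm : 0 < min (‖x‖ ^ (p - q)) (‖y‖ ^ (p - q)) := lt_min hX hY
  have hmax : max (‖x‖ ^ (p - q))⁻¹ (‖y‖ ^ (p - q))⁻¹
      ≤ (min (‖x‖ ^ (p - q)) (‖y‖ ^ (p - q)))⁻¹ :=
    max_le (inv_anti₀ hm (min_le_left _ _)) (inv_anti₀ hm (min_le_right _ _))
  set m := min (‖x‖ ^ (p - q)) (‖y‖ ^ (p - q))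
  have h' : alphaD q x y ≤ (|p| + |p - q|) / |p| * m⁻¹ * alphaD p x y := h.trans (by gcongr)
  calc _ ≤ |p| / (|p| + |p - q|) * m * ((|p| + |p - q|) / |p| * m⁻¹ * alphaD p x y) := by
        gcongr
    _ = alphaD p x y := by
      have : |p| + |p - q| ≠ 0 := by positivity
      field_simp
end

section
/- Let p, q be real numbers with pq > 0 and let A be a nonempty subset of X∖{0}. Then A is complete with respect to the metric α_p (every α_p-Cauchy sequence in A converges in (A, α_p)) if and only if A is complete with respect to the metric α_q. -/
theorem G_cont {Y : Type*} [NormedAddCommGroup Y] [NormedSpace ℝ Y] (r : ℝ) (hr : 0 < r) :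
    Continuous (fun v : Y => (‖v‖ ^ (r - 1)) • v) := by
  rw [continuous_iff_continuousAt]
  intro v
  by_cases hv : v = 0
  · subst hv
    unfold ContinuousAt
    simp only [smul_zero]
    rw [tendsto_zero_iff_norm_tendsto_zero]
    have h : Filter.Tendsto (fun v : Y => ‖v‖ ^ r) (nhds 0) (nhds 0) := by
      have h1 : Continuous (fun v : Y => ‖v‖ ^ r) :=
        continuous_norm.rpow_const (fun _ => Or.inr hr.le)
      have h2 := h1.tendsto 0
      simpa [Real.zero_rpow hr.ne'] using h2
    refine squeeze_zero (fun _ => norm_nonneg _) (fun w => ?_) h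
    by_cases hw : w = 0
    · subst hw
      simp [Real.zero_rpow hr.ne']
    · have hw' : 0 < ‖w‖ := norm_pos_iff.mpr hw
      rw [norm_smul, Real.norm_of_nonneg (by positivity), Real.rpow_sub_one hw'.ne']
      field_simp
      exact le_refl _
  · have hv' : ‖v‖ ≠ 0 := norm_ne_zero_iff.mpr hv
    exact (continuous_norm.continuousAt.rpow_const (Or.inl hv')).smul continuousAt_id

theorem G_comp {Y : Type*} [NormedAddCommGroup Y] [NormedSpace ℝ Y] (p q : ℝ) (hp : p ≠ 0)
    (x : Y) (hx : x ≠ 0) :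
    (‖(‖x‖ ^ (p - 1)) • x‖ ^ (q / p - 1)) • ((‖x‖ ^ (p - 1)) • x) = (‖x‖ ^ (q - 1)) • x := by
  have hx' : 0 < ‖x‖ := norm_pos_iff.mpr hx
  have h : ‖(‖x‖ ^ (p - 1)) • x‖ = ‖x‖ ^ p := by
    rw [norm_smul, Real.norm_of_nonneg (by positivity), Real.rpow_sub_one hx'.ne']
    field_simp
  rw [h, smul_smul, ← Real.rpow_mul hx'.le, ← Real.rpow_add hx']
  congr 2
  field_simp
  ring

theorem G_cauchy {Y : Type*} [NormedAddCommGroup Y] [NormedSpace ℝ Y] (r : ℝ) (hr : 0 < r)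
    (v : ℕ → Y) (hv : CauchySeq v) : CauchySeq (fun n => (‖v n‖ ^ (r - 1)) • v n) := by
  have h1 : CauchySeq (fun n => ((v n : Y) : UniformSpace.Completion Y)) :=
    hv.map (UniformSpace.Completion.uniformContinuous_coe Y)
  obtain ⟨l, hl⟩ := cauchySeq_tendsto_of_complete h1
  have h2 := (((G_cont r hr).tendsto l).comp hl).cauchySeq
  refine (UniformSpace.Completion.isUniformInducing_coe Y).cauchy_map_iff.mp ?_
  rw [Filter.map_map]
  change CauchySeq _
  refine Eq.mp (congrArg CauchySeq (funext fun n => ?_)) h2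
  simp only [Function.comp_apply, UniformSpace.Completion.coe_smul, UniformSpace.Completion.norm_coe]

theorem half {X : Type*} [NormedAddCommGroup X] [NormedSpace ℝ X]
    (p q : ℝ) (hpq : 0 < p * q) (A : Set X) (hA0 : ∀ a ∈ A, a ≠ 0)
    (H : AlphaComplete p A) : AlphaComplete q A := by
  have hp : p ≠ 0 := by rintro rfl; simp at hpq
  have hq : q ≠ 0 := by rintro rfl; simp at hpq
  have r1 : 0 < p / q := by
    rcases mul_pos_iff.mp hpq with h | h
    · exact div_pos h.1 h.2
    · exact div_pos_of_neg_of_neg h.1 h.2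
  have r2 : 0 < q / p := by rw [← inv_div]; exact inv_pos.mpr r1
  intro u hu hc
  have c1 : CauchySeq (fun n => (‖u n‖ ^ (q - 1)) • u n) := by
    rw [Metric.cauchySeq_iff]
    simpa only [dist_eq_norm, alphaD] using hc
  have c2 := G_cauchy _ r1 _ c1
  simp only [G_comp q p hq _ (hA0 _ (hu _))] at c2
  rw [Metric.cauchySeq_iff] at c2
  simp only [dist_eq_norm] at c2
  obtain ⟨a, ha, ht⟩ := H u hu c2
  refine ⟨a, ha, ?_⟩
  have t1 : Filter.Tendsto (fun n => (‖u n‖ ^ (p - 1)) • u n) Filter.atTop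
      (nhds ((‖a‖ ^ (p - 1)) • a)) := tendsto_iff_norm_sub_tendsto_zero.mpr ht
  have t2 := ((G_cont _ r2).tendsto _).comp t1
  simp only [Function.comp_def, G_comp p q hp _ (hA0 _ (hu _)), G_comp p q hp _ (hA0 _ ha)] at t2
  exact tendsto_iff_norm_sub_tendsto_zero.mp t2

theorem stmt_6 {X : Type*} [NormedAddCommGroup X] [NormedSpace ℝ X]
    (p q : ℝ) (hpq : 0 < p * q) (A : Set X) (hA : A.Nonempty) (hA0 : ∀ a ∈ A, a ≠ 0) :
    AlphaComplete p A ↔ AlphaComplete q A := by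
  exact ⟨half p q hpq A hA0, half q p (by rwa [mul_comm]) A hA0⟩
end

section
/- Let X be a nonzero real normed linear space and let p, q be real numbers with p > 0 and q < 0. Then there exist nonempty subsets A, B of X∖{0} such that A is complete with respect to the metric α_p but not complete with respect to α_q, and B is complete with respect to α_q but not complete with respect to α_p. -/
open Filter in
theorem aux_dist {X : Type*} [NormedAddCommGroup X] [NormedSpace ℝ X] (e : X) (he : ‖e‖ = 1)
    (r s t : ℝ) (hs : 0 < s) (ht : 0 < t) : alphaD r (s • e) (t • e) = |s ^ r - t ^ r| := by
  have key : ∀ s : ℝ, 0 < s → (‖s • e‖ ^ (r - 1)) • (s • e) = (s ^ r) • e := by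
    intro s hs
    rw [norm_smul, he, mul_one, Real.norm_of_nonneg hs.le, smul_smul, Real.rpow_sub_one hs.ne',
      div_mul_cancel₀ _ hs.ne']
  rw [alphaD, key s hs, key t ht, ← sub_smul, norm_smul, he, mul_one, Real.norm_eq_abs]

open Filter in
theorem aux_main {X : Type*} [NormedAddCommGroup X] [NormedSpace ℝ X] (e : X) (he : ‖e‖ = 1)
    (r r' : ℝ) (hr : r ≠ 0) (h : r' / r < 0) :
    ∃ A : Set X, A.Nonempty ∧ (∀ a ∈ A, a ≠ 0) ∧ AlphaComplete r A ∧ ¬ AlphaComplete r' A := by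
  have e0 : e ≠ 0 := by
    rintro rfl
    simp at he
  refine ⟨{x | ∃ c : ℝ, 1 ≤ c ∧ x = (c ^ (r⁻¹)) • e}, ⟨_, 1, le_rfl, rfl⟩, ?_, ?_, ?_⟩
  · rintro a ⟨c, hc, rfl⟩
    exact smul_ne_zero (Real.rpow_pos_of_pos (by linarith) _).ne' e0
  · intro u hu hC
    choose c hc huc using hu
    have hd : ∀ a b : ℝ, 1 ≤ a → 1 ≤ b →
        alphaD r ((a ^ (r⁻¹)) • e) ((b ^ (r⁻¹)) • e) = |a - b| := by
      intro a b ha hb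
      rw [aux_dist e he r _ _ (Real.rpow_pos_of_pos (by linarith) _)
        (Real.rpow_pos_of_pos (by linarith) _), Real.rpow_inv_rpow (by linarith) hr,
        Real.rpow_inv_rpow (by linarith) hr]
    have hcs : CauchySeq c := by
      rw [Metric.cauchySeq_iff]
      intro ε hε
      obtain ⟨N, hN⟩ := hC ε hε
      refine ⟨N, fun m hm n hn => ?_⟩
      have := hN m hm n hn
      rwa [huc m, huc n, hd _ _ (hc m) (hc n)] at this
    obtain ⟨L, hL⟩ := cauchySeq_tendsto_of_complete hcs
    have hL1 : 1 ≤ L := ge_of_tendsto' hL hc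
    refine ⟨_, ⟨L, hL1, rfl⟩, ?_⟩
    have h2 := (hL.sub_const L).abs
    rw [sub_self, abs_zero] at h2
    refine h2.congr fun n => ?_
    rw [huc n, hd _ _ (hc n) hL1]
  · intro hcomp
    have hpos : ∀ n : ℕ, (0:ℝ) < ((n:ℝ) + 1) ^ (r⁻¹) := fun n =>
      Real.rpow_pos_of_pos (by positivity) _
    have hlim : Tendsto (fun n : ℕ => (((n:ℝ) + 1) ^ (r⁻¹)) ^ r') atTop (nhds 0) := by
      have h1 : Tendsto (fun n : ℕ => (n:ℝ) + 1) atTop atTop :=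
        tendsto_atTop_add_const_right _ _ tendsto_natCast_atTop_atTop
      have h2 := (tendsto_rpow_neg_atTop (y := -(r' / r)) (by linarith)).comp h1
      refine h2.congr fun n => ?_
      rw [Function.comp_apply, neg_neg, ← Real.rpow_mul (by positivity)]
      congr 1
      rw [div_eq_mul_inv, mul_comm]
    obtain ⟨a, ⟨c, hc, rfl⟩, ha⟩ := hcomp (fun n : ℕ => (((n:ℝ) + 1) ^ (r⁻¹)) • e)
      (fun n => ⟨(n:ℝ) + 1, by simp, rfl⟩) (by
        intro ε hε
        obtain ⟨N, hN⟩ := Metric.cauchySeq_iff.1 hlim.cauchySeq ε hε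
        refine ⟨N, fun m hm n hn => ?_⟩
        rw [aux_dist e he _ _ _ (hpos m) (hpos n)]
        exact hN m hm n hn)
    have cpos : 0 < c ^ (r⁻¹) := Real.rpow_pos_of_pos (by linarith) _
    have h3 := (hlim.sub_const ((c ^ (r⁻¹)) ^ r')).abs
    have h4 := tendsto_nhds_unique ha (h3.congr fun n => (aux_dist e he _ _ _ (hpos n) cpos).symm)
    have := Real.rpow_pos_of_pos cpos r'
    rw [zero_sub, abs_neg, abs_of_pos this] at h4
    linarith

theorem stmt_7 {X : Type*} [NormedAddCommGroup X] [NormedSpace ℝ X] [Nontrivial X]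
    (p q : ℝ) (hp : 0 < p) (hq : q < 0) :
    ∃ A B : Set X,
      A.Nonempty ∧ (∀ a ∈ A, a ≠ 0) ∧ AlphaComplete p A ∧ ¬ AlphaComplete q A ∧
      B.Nonempty ∧ (∀ b ∈ B, b ≠ 0) ∧ AlphaComplete q B ∧ ¬ AlphaComplete p B := by
  obtain ⟨e, he⟩ := exists_norm_eq X (zero_le_one' ℝ)
  obtain ⟨A, h1, h2, h3, h4⟩ := aux_main e he p q hp.ne' (div_neg_of_neg_of_pos hq hp)
  obtain ⟨B, k1, k2, k3, k4⟩ := aux_main e he q p hq.ne (div_neg_of_pos_of_neg hp hq)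
  exact ⟨A, B, h1, h2, h3, h4, k1, k2, k3, k4⟩
end

section
/- Let X be a real inner product space with induced norm, let p be a real number and let x, y ∈ X be nonzero. Then: (i) if p < 1, α_p[x,y] ≤ β_p[x,y]; (ii) if p = 1, α_p[x,y] = β_p[x,y]; (iii) if p > 1, α_p[x,y] ≥ β_p[x,y]. Moreover, in cases (i) and (iii) equality holds if and only if ‖x‖ = ‖y‖. -/
theorem key {X : Type*} [NormedAddCommGroup X] [InnerProductSpace ℝ X]
    (p : ℝ) (x y : X) : alphaD p x y ^ 2 - betaD p x y ^ 2 =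
      ((‖x‖ ^ (p - 1)) ^ 2 - (‖y‖ ^ (p - 1)) ^ 2) * (‖x‖ ^ 2 - ‖y‖ ^ 2) := by
  unfold alphaD betaD
  rw [norm_sub_sq_real, norm_sub_sq_real]
  simp only [norm_smul, real_inner_smul_left, real_inner_smul_right, mul_pow, Real.norm_eq_abs,
    sq_abs]
  ring

theorem pos_aux (a b A B : ℝ) (ha : 0 < a) (hb : 0 < b) (hA : 0 < A) (hB : 0 < B)
    (h : 0 < (A - B) * (a - b)) : 0 < (A ^ 2 - B ^ 2) * (a ^ 2 - b ^ 2) := by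
  have : (A ^ 2 - B ^ 2) * (a ^ 2 - b ^ 2) = ((A - B) * (a - b)) * ((A + B) * (a + b)) := by ring
  rw [this]; positivity

theorem gt_case {X : Type*} [NormedAddCommGroup X] [InnerProductSpace ℝ X]
    (p : ℝ) (x y : X) (hx : x ≠ 0) (hy : y ≠ 0) (hp : 1 < p) (hne : ‖x‖ ≠ ‖y‖) :
    betaD p x y < alphaD p x y := by
  have ha := norm_pos_iff.2 hx
  have hb := norm_pos_iff.2 hy
  have hk := key p x y
  have h := pos_aux _ _ _ _ ha hb (Real.rpow_pos_of_pos ha (p - 1))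
    (Real.rpow_pos_of_pos hb (p - 1)) (by
      rcases lt_or_gt_of_ne hne with h | h
      · have := Real.rpow_lt_rpow ha.le h (sub_pos.2 hp)
        nlinarith
      · have := Real.rpow_lt_rpow hb.le h (sub_pos.2 hp)
        nlinarith)
  exact lt_of_pow_lt_pow_left₀ 2 (norm_nonneg _) (by linarith)

theorem lt_case {X : Type*} [NormedAddCommGroup X] [InnerProductSpace ℝ X]
    (p : ℝ) (x y : X) (hx : x ≠ 0) (hy : y ≠ 0) (hp : p < 1) (hne : ‖x‖ ≠ ‖y‖) :
    alphaD p x y < betaD p x y := by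
  have ha := norm_pos_iff.2 hx
  have hb := norm_pos_iff.2 hy
  have hk := key p x y
  have h := pos_aux _ _ _ _ ha hb (Real.rpow_pos_of_pos hb (p - 1))
    (Real.rpow_pos_of_pos ha (p - 1)) (by
      rcases lt_or_gt_of_ne hne with h | h
      · have := Real.rpow_lt_rpow_of_neg ha h (sub_neg.2 hp)
        nlinarith
      · have := Real.rpow_lt_rpow_of_neg hb h (sub_neg.2 hp)
        nlinarith)
  exact lt_of_pow_lt_pow_left₀ 2 (norm_nonneg _) (by linarith)

theorem eq_case {X : Type*} [NormedAddCommGroup X] [InnerProductSpace ℝ X]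
    (p : ℝ) (x y : X) (h : ‖x‖ = ‖y‖) : alphaD p x y = betaD p x y := by
  unfold alphaD betaD
  rw [h]

theorem stmt_8 {X : Type*} [NormedAddCommGroup X] [InnerProductSpace ℝ X]
    (p : ℝ) (x y : X) (hx : x ≠ 0) (hy : y ≠ 0) :
    (p < 1 → alphaD p x y ≤ betaD p x y) ∧
    (p = 1 → alphaD p x y = betaD p x y) ∧
    (1 < p → betaD p x y ≤ alphaD p x y) ∧
    (p < 1 → (alphaD p x y = betaD p x y ↔ ‖x‖ = ‖y‖)) ∧
    (1 < p → (alphaD p x y = betaD p x y ↔ ‖x‖ = ‖y‖)) := by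
  refine ⟨fun hp => ?_, fun hp => ?_, fun hp => ?_, fun hp => ⟨fun h => ?_, eq_case p x y⟩,
    fun hp => ⟨fun h => ?_, eq_case p x y⟩⟩
  · by_cases hne : ‖x‖ = ‖y‖
    · exact (eq_case p x y hne).le
    · exact (lt_case p x y hx hy hp hne).le
  · subst hp
    simp [alphaD, betaD]
  · by_cases hne : ‖x‖ = ‖y‖
    · exact (eq_case p x y hne).ge
    · exact (gt_case p x y hx hy hp hne).le
  · by_contra hne
    exact (lt_case p x y hx hy hp hne).ne h
  · by_contra hne
    exact (gt_case p x y hx hy hp hne).ne' h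
end

section
/- Let X be a real inner product space with induced norm, let p be a real number and let x, y ∈ X be nonzero. Then α_p[x,y] = √( (‖x‖^(p+1) − ‖y‖^(p+1))(‖x‖^(p−1) − ‖y‖^(p−1)) + ‖x‖^(p−1)‖y‖^(p−1)‖x − y‖² ). In particular, for p = 0, α_0[x,y] = √( (‖x − y‖² − (‖x‖ − ‖y‖)²) / (‖x‖‖y‖) ). -/
theorem stmt_9 {X : Type*} [NormedAddCommGroup X] [InnerProductSpace ℝ X]
    (p : ℝ) (x y : X) (hx : x ≠ 0) (hy : y ≠ 0) :
    alphaD p x y =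
      Real.sqrt ((‖x‖ ^ (p + 1) - ‖y‖ ^ (p + 1)) * (‖x‖ ^ (p - 1) - ‖y‖ ^ (p - 1)) +
        ‖x‖ ^ (p - 1) * ‖y‖ ^ (p - 1) * ‖x - y‖ ^ 2) ∧
    alphaD 0 x y =
      Real.sqrt ((‖x - y‖ ^ 2 - (‖x‖ - ‖y‖) ^ 2) / (‖x‖ * ‖y‖)) := by
  have hX : 0 < ‖x‖ := norm_pos_iff.mpr hx
  have hY : 0 < ‖y‖ := norm_pos_iff.mpr hy
  have key : ∀ a b : ℝ, ‖a • x - b • y‖ ^ 2 =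
      (a * ‖x‖ ^ 2 - b * ‖y‖ ^ 2) * (a - b) + a * b * ‖x - y‖ ^ 2 := by
    intro a b
    rw [norm_sub_sq_real, norm_sub_sq_real, norm_smul, norm_smul, inner_smul_left,
      inner_smul_right, mul_pow, mul_pow, Real.norm_eq_abs, Real.norm_eq_abs, sq_abs, sq_abs]
    simp only [conj_trivial]
    ring
  have hpow : ∀ t : ℝ, 0 < t → t ^ (p + 1) = t ^ (p - 1) * t ^ 2 := by
    intro t ht
    rw [← Real.rpow_natCast t 2, ← Real.rpow_add ht]
    congr 1
    push_cast
    ring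
  refine ⟨?_, ?_⟩
  · rw [hpow _ hX, hpow _ hY, ← key, Real.sqrt_sq (norm_nonneg _)]
    rfl
  · have h : (‖x - y‖ ^ 2 - (‖x‖ - ‖y‖) ^ 2) / (‖x‖ * ‖y‖) = (alphaD 0 x y) ^ 2 := by
      unfold alphaD
      rw [key, zero_sub, Real.rpow_neg_one, Real.rpow_neg_one]
      field_simp
      ring
    rw [h, Real.sqrt_sq]
    exact norm_nonneg _
end

section
/- Let X be a real inner product space, let x, y ∈ X be linearly independent, and let t be a real number satisfying (−⟨x,y⟩ − √(‖x‖²‖y‖² − ⟨x,y⟩²))/‖y‖² ≤ t ≤ (−⟨x,y⟩ + √(‖x‖²‖y‖² − ⟨x,y⟩²))/‖y‖². Then ‖x + t•y‖ = (√(‖x‖²‖y‖² − ⟨x,y⟩²)/‖y‖) · Σ_{k=0}^∞ C(1/2, k) · ( (t‖y‖² + ⟨x,y⟩)/√(‖x‖²‖y‖² − ⟨x,y⟩²) )^(2k), where C(1/2, k) = (∏_{i=0}^{k−1} (1/2 − i)) / k! is the generalized binomial coefficient. -/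
open scoped RealInnerProductSpace

/-- The generalized binomial coefficient `C(r, k) = (∏_{i=0}^{k-1} (r - i)) / k!`. -/
noncomputable def genBinom (r : ℝ) (k : ℕ) : ℝ :=
  (∏ i ∈ Finset.range k, (r - i)) / (Nat.factorial k : ℝ)

lemma smeval_desc_eq (r : ℝ) (k : ℕ) :
    (descPochhammer ℤ k).smeval r = ∏ i ∈ Finset.range k, (r - i) := by
  induction k with
  | zero => simp
  | succ k ih =>
    rw [Finset.prod_range_succ, ← ih]
    simp [descPochhammer_succ_right, Polynomial.smeval_mul, Polynomial.smeval_natCast]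

lemma genBinom_eq_choose (r : ℝ) (k : ℕ) : Ring.choose r k = genBinom r k := by
  rw [Ring.choose_eq_smul, smeval_desc_eq, genBinom, smul_eq_mul, div_eq_inv_mul]

lemma genBinom_succ (r : ℝ) (k : ℕ) :
    genBinom r (k + 1) * (k + 1) = genBinom r k * (r - k) := by
  unfold genBinom
  rw [Finset.prod_range_succ, Nat.factorial_succ]
  have : (Nat.factorial k : ℝ) ≠ 0 := by positivity
  have : (k : ℝ) + 1 ≠ 0 := by positivity
  push_cast
  field_simp

lemma genBinom_half_summable : Summable (fun k => |genBinom (1 / 2) k|) := by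
  rw [← summable_nat_add_iff 1]
  have key : ∀ n : ℕ, ∑ k ∈ Finset.range n, |genBinom (1 / 2) (k + 1)|
      = 1 - 2 * ((n : ℝ) + 1) * |genBinom (1 / 2) (n + 1)| := by
    intro n
    induction n with
    | zero => norm_num [genBinom]
    | succ n ih =>
      rw [Finset.sum_range_succ, ih]
      have h := congrArg abs (genBinom_succ (1 / 2) (n + 1))
      rw [abs_mul, abs_mul, abs_of_nonneg (by positivity : (0 : ℝ) ≤ ((n + 1 : ℕ) : ℝ) + 1),
        abs_of_nonpos (by push_cast; linarith [(Nat.cast_nonneg n : (0 : ℝ) ≤ n)]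
          : (1 / 2 : ℝ) - ((n + 1 : ℕ) : ℝ) ≤ 0)] at h
      push_cast at h ⊢
      linarith
  refine summable_of_sum_range_le (c := 1) (fun _ => abs_nonneg _) (fun n => ?_)
  rw [key]
  have : 0 ≤ 2 * ((n : ℝ) + 1) * |genBinom (1 / 2) (n + 1)| := by positivity
  linarith

lemma tsum_lt_one (z : ℝ) (h0 : 0 ≤ z) (h1 : z < 1) :
    ∑' k : ℕ, genBinom (1 / 2) k * z ^ k = √(1 + z) := by
  have h := (Real.one_add_rpow_hasFPowerSeriesOnBall_zero (a := 1 / 2)).hasSum (y := z) (by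
    simp [Metric.mem_eball, edist_dist, abs_of_nonneg h0, h1])
  have := h.tsum_eq
  simp only [zero_add, ← Real.sqrt_eq_rpow] at this
  rw [← this]
  refine tsum_congr fun k => ?_
  rw [binomialSeries_apply, genBinom_eq_choose]
  simp

lemma tsum_le_one (z : ℝ) (h0 : 0 ≤ z) (h1 : z ≤ 1) :
    ∑' k : ℕ, genBinom (1 / 2) k * z ^ k = √(1 + z) := by
  have hc : ContinuousOn (fun z : ℝ => ∑' k : ℕ, genBinom (1 / 2) k * z ^ k) (Set.Icc 0 1) := by
    refine continuousOn_tsum (fun k => by fun_prop) genBinom_half_summable ?_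
    rintro k z ⟨h0, h1⟩
    rw [norm_mul, norm_pow, Real.norm_eq_abs, Real.norm_eq_abs, abs_of_nonneg h0]
    exact mul_le_of_le_one_right (abs_nonneg _) (pow_le_one₀ h0 h1)
  have he : Set.EqOn (fun z : ℝ => ∑' k : ℕ, genBinom (1 / 2) k * z ^ k) (fun z => √(1 + z))
      (Set.Ico 0 1) := fun z hz => tsum_lt_one z hz.1 hz.2
  exact he.of_subset_closure hc (by fun_prop) Set.Ico_subset_Icc_self
    (by rw [closure_Ico (by norm_num)]) ⟨h0, h1⟩

theorem stmt_10 {X : Type*} [NormedAddCommGroup X] [InnerProductSpace ℝ X]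
    (x y : X) (h : LinearIndependent ℝ ![x, y]) (t : ℝ)
    (ht1 : (-⟪x, y⟫ - Real.sqrt (‖x‖ ^ 2 * ‖y‖ ^ 2 - ⟪x, y⟫ ^ 2)) / ‖y‖ ^ 2 ≤ t)
    (ht2 : t ≤ (-⟪x, y⟫ + Real.sqrt (‖x‖ ^ 2 * ‖y‖ ^ 2 - ⟪x, y⟫ ^ 2)) / ‖y‖ ^ 2) :
    ‖x + t • y‖ =
      (Real.sqrt (‖x‖ ^ 2 * ‖y‖ ^ 2 - ⟪x, y⟫ ^ 2) / ‖y‖) *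
        ∑' k : ℕ, genBinom (1 / 2) k *
          ((t * ‖y‖ ^ 2 + ⟪x, y⟫) / Real.sqrt (‖x‖ ^ 2 * ‖y‖ ^ 2 - ⟪x, y⟫ ^ 2)) ^ (2 * k) := by
  have hy : y ≠ 0 := by simpa using h.ne_zero 1
  have hny : 0 < ‖y‖ := norm_pos_iff.2 hy
  have hexp : ∀ s : ℝ, ‖x + s • y‖ ^ 2 = ‖x‖ ^ 2 + 2 * s * ⟪x, y⟫ + s ^ 2 * ‖y‖ ^ 2 := by
    intro s
    rw [norm_add_sq_real, real_inner_smul_right, norm_smul, mul_pow, Real.norm_eq_abs, sq_abs]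
    ring
  have hD : 0 < ‖x‖ ^ 2 * ‖y‖ ^ 2 - ⟪x, y⟫ ^ 2 := by
    have hne : x + (-⟪x, y⟫ / ‖y‖ ^ 2) • y ≠ 0 := by
      intro h0
      have := (LinearIndependent.pair_iff.1 h) 1 (-⟪x, y⟫ / ‖y‖ ^ 2) (by simpa using h0)
      simp at this
    have h1 : 0 < ‖y‖ ^ 2 * ‖x + (-⟪x, y⟫ / ‖y‖ ^ 2) • y‖ ^ 2 := by
      have := norm_pos_iff.2 hne
      positivity
    rw [hexp] at h1
    convert h1 using 1
    field_simp
    ring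
  have hexp' := hexp t
  generalize ⟪x, y⟫ = p at *
  set D := ‖x‖ ^ 2 * ‖y‖ ^ 2 - p ^ 2 with hDdef
  have hs : 0 < √D := Real.sqrt_pos.2 hD
  have hs2 : √D ^ 2 = D := Real.sq_sqrt hD.le
  rw [div_le_iff₀ (by positivity)] at ht1
  rw [le_div_iff₀ (by positivity)] at ht2
  have hw : ((t * ‖y‖ ^ 2 + p) / √D) ^ 2 ≤ 1 := by
    rw [div_pow, div_le_one (by positivity)]
    exact sq_le_sq' (by linarith) (by linarith)
  simp only [pow_mul]
  rw [tsum_le_one _ (by positivity) hw]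
  rw [← sq_eq_sq₀ (norm_nonneg _) (by positivity), mul_pow, Real.sq_sqrt (by positivity), hexp',
    div_pow, div_pow, hs2]
  field_simp
  rw [hDdef]
  ring
end

section
/- Let p, q be real numbers with q ≠ 0 and 0 ≤ p/q ≤ 1. Then for all nonzero x, y ∈ X, (p/q) · α_q[x,y] / max(‖x‖^(q−p), ‖y‖^(q−p)) ≤ α_p[x,y] ≤ ((2q − p)/q) · α_q[x,y] / max(‖x‖^(q−p), ‖y‖^(q−p)). -/
theorem core_aux {X : Type*} [NormedAddCommGroup X] [NormedSpace ℝ X]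
    (u v : X) (t c : ℝ) (h0 : 0 ≤ t) (h1 : t ≤ 1) (hc : 1 ≤ c)
    (h : c * ‖v‖ ≤ (1 - t) * ‖u‖ + t * ‖v‖) :
    t * ‖u - v‖ ≤ ‖u - c • v‖ ∧ ‖u - c • v‖ ≤ (2 - t) * ‖u - v‖ := by
  have e : ‖(c - 1) • v‖ = (c - 1) * ‖v‖ := by
    rw [norm_smul, Real.norm_of_nonneg (by linarith)]
  have e2 : ‖c • v‖ = c * ‖v‖ := by
    rw [norm_smul, Real.norm_of_nonneg (by linarith)]
  have a1 : ‖u - v‖ ≤ ‖u - c • v‖ + ‖(c - 1) • v‖ := by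
    have : u - v = (u - c • v) + (c - 1) • v := by module
    rw [this]; exact norm_add_le _ _
  have a2 : ‖u - c • v‖ ≤ ‖u - v‖ + ‖(c - 1) • v‖ := by
    have : u - c • v = (u - v) - (c - 1) • v := by module
    rw [this]; exact norm_sub_le _ _
  have a3 := norm_sub_norm_le u (c • v)
  have a4 := norm_sub_norm_le u v
  rw [e] at a1 a2
  rw [e2] at a3
  constructor
  · nlinarith [mul_le_mul_of_nonneg_left a1 h0,
      mul_le_mul_of_nonneg_left a3 (sub_nonneg.2 h1)]
  · nlinarith [mul_le_mul_of_nonneg_left a4 (sub_nonneg.2 h1)]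

theorem half_aux {X : Type*} [NormedAddCommGroup X] [NormedSpace ℝ X]
    (p q : ℝ) (hq : q ≠ 0) (h0 : 0 ≤ p / q) (h1 : p / q ≤ 1)
    (x y : X) (hx : x ≠ 0) (hy : y ≠ 0) (hle : ‖y‖ ^ q ≤ ‖x‖ ^ q) :
    (p / q) * (alphaD q x y / max (‖x‖ ^ (q - p)) (‖y‖ ^ (q - p)))
      ≤ alphaD p x y ∧
    alphaD p x y ≤
      ((2 * q - p) / q) * (alphaD q x y / max (‖x‖ ^ (q - p)) (‖y‖ ^ (q - p))) := by
  have hx' : 0 < ‖x‖ := norm_pos_iff.2 hx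
  have hy' : 0 < ‖y‖ := norm_pos_iff.2 hy
  have key : ∀ r : ℝ, 0 < r → (r ^ q) ^ (1 - p / q) = r ^ (q - p) := by
    intro r hr
    rw [← Real.rpow_mul hr.le]; congr 1; field_simp
  have key2 : ∀ r : ℝ, 0 < r → (r ^ q) ^ (p / q) = r ^ p := by
    intro r hr
    rw [← Real.rpow_mul hr.le]; congr 1; field_simp
  have hM : ‖y‖ ^ (q - p) ≤ ‖x‖ ^ (q - p) := by
    rw [← key _ hx', ← key _ hy']
    exact Real.rpow_le_rpow (by positivity) hle (by linarith)
  have nrm : ∀ z : X, 0 < ‖z‖ → ‖(‖z‖ ^ (q - 1)) • z‖ = ‖z‖ ^ q := by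
    intro z hz
    rw [norm_smul, Real.norm_of_nonneg (by positivity), ← Real.rpow_add_one hz.ne']
    congr 1; ring
  rw [max_eq_left hM]
  have hA : 0 < ‖x‖ ^ (q - p) := by positivity
  have hB : 0 < ‖y‖ ^ (q - p) := by positivity
  have hcy : ‖y‖ ^ p * ‖y‖ ^ (q - p) = ‖y‖ ^ q := by
    rw [← Real.rpow_add hy']; congr 1; ring
  have am := Real.geom_mean_le_arith_mean2_weighted (sub_nonneg.2 h1) h0
    (p₁ := ‖x‖ ^ q) (p₂ := ‖y‖ ^ q) (by positivity) (by positivity) (by ring)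
  rw [key _ hx', key2 _ hy'] at am
  have main := core_aux ((‖x‖ ^ (q - 1)) • x) ((‖y‖ ^ (q - 1)) • y) (p / q)
    (‖x‖ ^ (q - p) / ‖y‖ ^ (q - p)) h0 h1 ((one_le_div hB).2 hM) (by
      rw [nrm x hx', nrm y hy']
      refine le_trans (le_of_eq ?_) am
      rw [← hcy]; field_simp)
  have e : ‖(‖x‖ ^ (q - 1)) • x - (‖x‖ ^ (q - p) / ‖y‖ ^ (q - p)) • (‖y‖ ^ (q - 1)) • y‖
      = ‖x‖ ^ (q - p) * alphaD p x y := by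
    have hz : ∀ z : X, 0 < ‖z‖ → ‖z‖ ^ (q - 1) = ‖z‖ ^ (q - p) * ‖z‖ ^ (p - 1) := by
      intro z hz
      rw [← Real.rpow_add hz]; congr 1; ring
    unfold alphaD
    rw [← Real.norm_of_nonneg hA.le, ← norm_smul, Real.norm_of_nonneg hA.le, smul_sub,
      smul_smul, smul_smul, smul_smul, hz x hx', hz y hy']
    congr 3
    field_simp
  rw [e] at main
  have e3 : (2 * q - p) / q = 2 - p / q := by field_simp
  rw [e3, ← mul_div_assoc, ← mul_div_assoc, div_le_iff₀ hA, le_div_iff₀ hA, mul_comm (alphaD p x y)]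
  exact main

theorem stmt_13 {X : Type*} [NormedAddCommGroup X] [NormedSpace ℝ X]
    (p q : ℝ) (hq : q ≠ 0) (h0 : 0 ≤ p / q) (h1 : p / q ≤ 1)
    (x y : X) (hx : x ≠ 0) (hy : y ≠ 0) :
    (p / q) * (alphaD q x y / max (‖x‖ ^ (q - p)) (‖y‖ ^ (q - p)))
      ≤ alphaD p x y ∧
    alphaD p x y ≤
      ((2 * q - p) / q) * (alphaD q x y / max (‖x‖ ^ (q - p)) (‖y‖ ^ (q - p))) := by
  rcases le_total (‖y‖ ^ q) (‖x‖ ^ q) with h | h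
  · exact half_aux p q hq h0 h1 x y hx hy h
  · have comm : ∀ r : ℝ, alphaD r x y = alphaD r y x := fun r => norm_sub_rev _ _
    rw [comm, comm, max_comm]
    exact half_aux p q hq h0 h1 y x hy hx h
end

section
/- Let p, q be real numbers with q ≠ 0 and p/q ≤ 0. Then for all nonzero x, y ∈ X, (p/(2p − q)) · (max(‖x‖^p, ‖y‖^p)/max(‖x‖^q, ‖y‖^q)) · α_q[x,y] ≤ α_p[x,y] ≤ ((2q − p)/q) · (max(‖x‖^p, ‖y‖^p)/max(‖x‖^q, ‖y‖^q)) · α_q[x,y]. -/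
theorem aux_key {X : Type*} [NormedAddCommGroup X] [NormedSpace ℝ X]
    (u v : X) (hu : ‖u‖ = 1) (hv : ‖v‖ = 1) (A B t : ℝ) (hB : 0 < B) (hAB : B ≤ A)
    (ht : 0 ≤ t) :
    A * ‖A ^ (-t) • u - B ^ (-t) • v‖ ≤ (2 + t) * B ^ (-t) * ‖A • u - B • v‖ := by
  have hA : 0 < A := lt_of_lt_of_le hB hAB
  have hD : A - B ≤ ‖A • u - B • v‖ := by
    have h := norm_sub_norm_le (A • u) (B • v)
    rwa [norm_smul, norm_smul, hu, hv, Real.norm_of_nonneg hA.le, Real.norm_of_nonneg hB.le,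
      mul_one, mul_one] at h
  have hPA : 0 < A ^ (-t) := Real.rpow_pos_of_pos hA _
  have hPB : 0 < B ^ (-t) := Real.rpow_pos_of_pos hB _
  have hle : A ^ (-t) ≤ B ^ (-t) := Real.rpow_le_rpow_of_nonpos hB hAB (by linarith)
  have hbern : A * B ^ (-t) - B * A ^ (-t) ≤ (1 + t) * B ^ (-t) * (A - B) := by
    have hs : 0 < B / A := div_pos hB hA
    have h := one_add_mul_self_le_rpow_one_add (s := B / A - 1) (by linarith) (p := 1 + t)
      (by linarith)
    have e : (1 + (B / A - 1)) ^ (1 + t) = B / A * (A ^ (-t) / B ^ (-t)) := by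
      rw [add_sub_cancel, Real.rpow_add hs, Real.rpow_one, Real.div_rpow hB.le hA.le,
        Real.rpow_neg hA.le, Real.rpow_neg hB.le]
      have := Real.rpow_pos_of_pos hA t
      have := Real.rpow_pos_of_pos hB t
      field_simp
    rw [e] at h
    have h2 := mul_le_mul_of_nonneg_left h (mul_pos hA hPB).le
    have e1 : A * B ^ (-t) * (B / A * (A ^ (-t) / B ^ (-t))) = B * A ^ (-t) := by
      field_simp
    have e2 : A * B ^ (-t) * (1 + (1 + t) * (B / A - 1))
        = A * B ^ (-t) - (1 + t) * B ^ (-t) * (A - B) := by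
      field_simp
      ring
    rw [e1, e2] at h2
    linarith
  have hnn : 0 ≤ A * B ^ (-t) - B * A ^ (-t) := by
    have := mul_le_mul hAB hle hPA.le hA.le
    linarith
  have e : A • (A ^ (-t) • u - B ^ (-t) • v)
      = A ^ (-t) • (A • u - B • v) - (A * B ^ (-t) - B * A ^ (-t)) • v := by
    module
  calc A * ‖A ^ (-t) • u - B ^ (-t) • v‖ = ‖A • (A ^ (-t) • u - B ^ (-t) • v)‖ := by
        rw [norm_smul, Real.norm_of_nonneg hA.le]
    _ ≤ A ^ (-t) * ‖A • u - B • v‖ + (A * B ^ (-t) - B * A ^ (-t)) := by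
        rw [e]
        refine (norm_sub_le _ _).trans ?_
        rw [norm_smul, norm_smul, hv, Real.norm_of_nonneg hPA.le, Real.norm_of_nonneg hnn, mul_one]
    _ ≤ _ := by
        have h1 := mul_le_mul_of_nonneg_right hle (norm_nonneg (A • u - B • v))
        have h2 := mul_le_mul_of_nonneg_left hD
          (mul_nonneg (by linarith : 0 ≤ 1 + t) hPB.le)
        linarith

theorem aux_alpha {X : Type*} [NormedAddCommGroup X] [NormedSpace ℝ X]
    (p : ℝ) (x y : X) (hx : x ≠ 0) (hy : y ≠ 0) :
    alphaD p x y = ‖‖x‖ ^ p • (‖x‖⁻¹ • x) - ‖y‖ ^ p • (‖y‖⁻¹ • y)‖ := by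
  unfold alphaD
  rw [Real.rpow_sub_one (norm_ne_zero_iff.2 hx), Real.rpow_sub_one (norm_ne_zero_iff.2 hy),
    smul_smul, smul_smul, div_eq_mul_inv, div_eq_mul_inv]

theorem aux_comm {X : Type*} [NormedAddCommGroup X] [NormedSpace ℝ X]
    (p : ℝ) (x y : X) : alphaD p x y = alphaD p y x := norm_sub_rev _ _

theorem aux_upper {X : Type*} [NormedAddCommGroup X] [NormedSpace ℝ X]
    (p q : ℝ) (hq : q ≠ 0) (hpq : p / q ≤ 0) (x y : X) (hx : x ≠ 0) (hy : y ≠ 0) :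
    alphaD p x y ≤
      ((2 * q - p) / q) * (max (‖x‖ ^ p) (‖y‖ ^ p) / max (‖x‖ ^ q) (‖y‖ ^ q)) * alphaD q x y := by
  wlog h : ‖y‖ ^ q ≤ ‖x‖ ^ q generalizing x y
  · rw [aux_comm p, aux_comm q, max_comm (‖x‖ ^ p), max_comm (‖x‖ ^ q)]
    exact this y x hy hx (not_le.1 h).le
  have hx0 := norm_pos_iff.2 hx
  have hy0 := norm_pos_iff.2 hy
  have ex : ‖x‖ ^ p = (‖x‖ ^ q) ^ (-(-(p / q))) := by
    rw [← Real.rpow_mul hx0.le]; congr 1; field_simp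
  have ey : ‖y‖ ^ p = (‖y‖ ^ q) ^ (-(-(p / q))) := by
    rw [← Real.rpow_mul hy0.le]; congr 1; field_simp
  have hB := Real.rpow_pos_of_pos hy0 q
  have hA := Real.rpow_pos_of_pos hx0 q
  have hk := aux_key (‖x‖⁻¹ • x) (‖y‖⁻¹ • y)
    (by rw [norm_smul, norm_inv, norm_norm, inv_mul_cancel₀ hx0.ne'])
    (by rw [norm_smul, norm_inv, norm_norm, inv_mul_cancel₀ hy0.ne'])
    (‖x‖ ^ q) (‖y‖ ^ q) (-(p / q)) hB h (by linarith)
  have hle : ‖x‖ ^ p ≤ ‖y‖ ^ p := by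
    rw [ex, ey]
    exact Real.rpow_le_rpow_of_nonpos hB h (by linarith)
  rw [← ex, ← ey, ← aux_alpha p x y hx hy, ← aux_alpha q x y hx hy] at hk
  rw [max_eq_right hle, max_eq_left h]
  have e : (2 * q - p) / q * (‖y‖ ^ p / ‖x‖ ^ q) * alphaD q x y
      = ((2 + -(p / q)) * ‖y‖ ^ p * alphaD q x y) / ‖x‖ ^ q := by
    field_simp
    ring
  rw [e, le_div_iff₀ hA]
  linarith

theorem stmt_14 {X : Type*} [NormedAddCommGroup X] [NormedSpace ℝ X]
    (p q : ℝ) (hq : q ≠ 0) (hpq : p / q ≤ 0) (x y : X) (hx : x ≠ 0) (hy : y ≠ 0) :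
    (p / (2 * p - q)) * (max (‖x‖ ^ p) (‖y‖ ^ p) / max (‖x‖ ^ q) (‖y‖ ^ q)) * alphaD q x y
      ≤ alphaD p x y ∧
    alphaD p x y ≤
      ((2 * q - p) / q) * (max (‖x‖ ^ p) (‖y‖ ^ p) / max (‖x‖ ^ q) (‖y‖ ^ q)) * alphaD q x y := by
  refine ⟨?_, aux_upper p q hq hpq x y hx hy⟩
  have hx0 := norm_pos_iff.2 hx
  by_cases hp : p = 0
  · subst hp
    simp only [zero_div, zero_mul]
    exact norm_nonneg _
  have hqp : q / p ≤ 0 := by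
    rw [← inv_div]; exact inv_nonpos.2 hpq
  have h := aux_upper q p hp hqp x y hx hy
  have hP : 0 < max (‖x‖ ^ p) (‖y‖ ^ p) := lt_max_of_lt_left (Real.rpow_pos_of_pos hx0 _)
  have hQ : 0 < max (‖x‖ ^ q) (‖y‖ ^ q) := lt_max_of_lt_left (Real.rpow_pos_of_pos hx0 _)
  have hc : 0 < (2 * p - q) / p := by
    have : (2 * p - q) / p = 2 - q / p := by field_simp
    rw [this]; linarith
  have hc' : 2 * p - q ≠ 0 := by
    intro h0; rw [h0] at hc; simp at hc
  have hcc : 0 < p / (2 * p - q) := by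
    rw [← inv_div]; exact inv_pos.2 hc
  refine (mul_le_mul_of_nonneg_left h (mul_pos hcc (div_pos hP hQ)).le).trans (le_of_eq ?_)
  generalize max (‖x‖ ^ p) (‖y‖ ^ p) = P at *
  generalize max (‖x‖ ^ q) (‖y‖ ^ q) = Q at *
  generalize 2 * p - q = c at *
  field_simp
end

section
/- Let p, q be real numbers with q ≠ 0 and let x, y ∈ X be nonzero. (i) If p/q ≥ 1, then α_p[x,y] ≤ (p/q) · α_q[x,y] · ∫₀¹ ‖ (1−t)·‖x‖^(q−1) • x + t·‖y‖^(q−1) • y ‖^(p/q − 1) dt. (ii) If p/q < 1 and x, y are linearly independent, then α_p[x,y] ≤ ((2q − p)/q) · α_q[x,y] · ∫₀¹ ‖ (1−t)·‖x‖^(q−1) • x + t·‖y‖^(q−1) • y ‖^(p/q − 1) dt. -/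
open Set Filter Topology in
theorem aux_path {X : Type*} [NormedAddCommGroup X] [NormedSpace ℝ X]
    (f : ℝ → X) (g : ℝ → ℝ) (hg : ContinuousOn g (Icc 0 1)) (K : ℝ) (hK : 0 ≤ K)
    (hf : ContinuousOn f (Icc 0 1))
    (h : ∀ t ∈ Icc (0:ℝ) 1, ∀ z ∈ Icc (0:ℝ) 1, ‖f z - f t‖ ≤ K * max (g z) (g t) * |z - t|) :
    ‖f 1 - f 0‖ ≤ K * ∫ t in (0:ℝ)..1, g t := by
  have hgi : IntervalIntegrable g MeasureTheory.volume 0 1 := by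
    apply ContinuousOn.intervalIntegrable
    rwa [uIcc_of_le zero_le_one]
  have key := image_le_of_liminf_slope_right_le_deriv_boundary
    (f := fun t => ‖f t - f 0‖) (a := 0) (b := 1)
    (B := fun t => K * ∫ s in (0:ℝ)..t, g s) (B' := fun t => K * g t)
    ((hf.sub continuousOn_const).norm) (by simp) ?_ ?_ ?_
  · exact key (by simp : (1:ℝ) ∈ Icc (0:ℝ) 1)
  · apply continuousOn_const.mul
    have := intervalIntegral.continuousOn_primitive_interval' hgi (a := 0) (by simp)
    rwa [uIcc_of_le zero_le_one] at this
  · intro t ht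
    apply HasDerivWithinAt.const_mul
    have hcont : ContinuousWithinAt g (Ioi t) t := by
      have : ContinuousWithinAt g (Icc t 1) t :=
        (hg t ⟨ht.1, ht.2.le⟩).mono (Icc_subset_Icc_left ht.1)
      exact (this.mono_of_mem_nhdsWithin (Icc_mem_nhdsGE ht.2)).mono Ioi_subset_Ici_self
    refine intervalIntegral.integral_hasDerivWithinAt_right
      (hgi.mono_set ?_) ?_ hcont
    · rw [uIcc_of_le ht.1, uIcc_of_le zero_le_one]
      exact Icc_subset_Icc_right ht.2.le
    · refine ⟨Ioc t 1, Ioc_mem_nhdsGT ht.2, ?_⟩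
      apply ContinuousOn.aestronglyMeasurable _ measurableSet_Ioc
      exact hg.mono (fun z hz => ⟨ht.1.trans hz.1.le, hz.2⟩)
  · intro t ht r hr
    apply Eventually.frequently
    have ht' : t ∈ Icc (0:ℝ) 1 := ⟨ht.1, ht.2.le⟩
    have hsub : 𝓝[>] t ≤ 𝓝[Icc 0 1] t := by
      rw [← nhdsWithin_Ioc_eq_nhdsGT ht.2]
      exact nhdsWithin_mono _ (fun z hz => ⟨ht.1.trans hz.1.le, hz.2⟩)
    have hlim : Tendsto (fun z => K * max (g z) (g t)) (𝓝[>] t) (𝓝 (K * max (g t) (g t))) :=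
      (((hg t ht').mono_left hsub).max tendsto_const_nhds).const_mul K
    rw [max_self] at hlim
    filter_upwards [hlim.eventually_lt_const hr, Ioc_mem_nhdsGT ht.2] with z hz hz1
    refine lt_of_le_of_lt ?_ hz
    have h0 : 0 < z - t := sub_pos.2 hz1.1
    rw [slope_def_field, div_le_iff₀ h0]
    have h1 := h t ht' z ⟨ht.1.trans hz1.1.le, hz1.2⟩
    rw [abs_of_pos h0] at h1
    refine le_trans ?_ h1
    have := norm_sub_norm_le (f z - f 0) (f t - f 0)
    simpa using this

theorem aux_scal (A B s : ℝ) (hA : 0 < A) (hB : 0 < B) :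
    A ^ s - B ^ s ≤ A ^ s * (s * (Real.log A - Real.log B)) := by
  have h : B ^ s = A ^ s * Real.exp (s * (Real.log B - Real.log A)) := by
    rw [Real.rpow_def_of_pos hA, Real.rpow_def_of_pos hB, ← Real.exp_add]
    congr 1; ring
  have h1 := Real.add_one_le_exp (s * (Real.log B - Real.log A))
  have h2 := mul_le_mul_of_nonneg_left h1 (Real.rpow_nonneg hA.le s)
  rw [← h] at h2
  linarith

theorem aux_scal2 (U V s : ℝ) (hV : 0 < V) (hUV : V ≤ U) :
    |U ^ s - V ^ s| * V ≤ |s| * max (U ^ s) (V ^ s) * (U - V) := by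
  have hU : 0 < U := hV.trans_le hUV
  have hL : 0 ≤ Real.log U - Real.log V := sub_nonneg.2 (Real.log_le_log hV hUV)
  have hL2 : (Real.log U - Real.log V) * V ≤ U - V := by
    rw [← Real.log_div hU.ne' hV.ne']
    have := Real.log_le_sub_one_of_pos (div_pos hU hV)
    calc _ ≤ (U / V - 1) * V := mul_le_mul_of_nonneg_right this hV.le
      _ = _ := by field_simp
  have hM : 0 ≤ max (U ^ s) (V ^ s) := (Real.rpow_nonneg hU.le s).trans (le_max_left _ _)
  have h1 : |U ^ s - V ^ s| ≤ |s| * max (U ^ s) (V ^ s) * (Real.log U - Real.log V) := by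
    rw [abs_le']
    constructor
    · refine (aux_scal U V s hU hV).trans ?_
      calc U ^ s * (s * (Real.log U - Real.log V))
          ≤ max (U ^ s) (V ^ s) * (|s| * (Real.log U - Real.log V)) := by
            apply (mul_le_mul_of_nonneg_left (mul_le_mul_of_nonneg_right (le_abs_self s) hL)
              (Real.rpow_nonneg hU.le s)).trans
            exact mul_le_mul_of_nonneg_right (le_max_left _ _) (by positivity)
        _ = _ := by ring
    · rw [neg_sub]
      refine (aux_scal V U s hV hU).trans ?_
      calc V ^ s * (s * (Real.log V - Real.log U))
          = V ^ s * (-s * (Real.log U - Real.log V)) := by ring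
        _ ≤ max (U ^ s) (V ^ s) * (|s| * (Real.log U - Real.log V)) := by
            apply (mul_le_mul_of_nonneg_left (mul_le_mul_of_nonneg_right (neg_le_abs s) hL)
              (Real.rpow_nonneg hV.le s)).trans
            exact mul_le_mul_of_nonneg_right (le_max_right _ _) (by positivity)
        _ = _ := by ring
  calc _ ≤ |s| * max (U ^ s) (V ^ s) * (Real.log U - Real.log V) * V :=
        mul_le_mul_of_nonneg_right h1 hV.le
    _ = |s| * max (U ^ s) (V ^ s) * ((Real.log U - Real.log V) * V) := by ring
    _ ≤ _ := mul_le_mul_of_nonneg_left hL2 (by positivity)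

theorem aux_vec {X : Type*} [NormedAddCommGroup X] [NormedSpace ℝ X] (s : ℝ) (u v : X)
    (h : 0 ≤ s ∨ (u ≠ 0 ∧ v ≠ 0)) :
    ‖(‖u‖ ^ s) • u - (‖v‖ ^ s) • v‖ ≤ (1 + |s|) * max (‖u‖ ^ s) (‖v‖ ^ s) * ‖u - v‖ := by
  wlog huv : ‖v‖ ≤ ‖u‖ generalizing u v
  · have := this v u (h.imp id And.symm) (le_of_not_ge huv)
    rwa [norm_sub_rev, max_comm, norm_sub_rev v u] at this
  have hM : 0 ≤ max (‖u‖ ^ s) (‖v‖ ^ s) := (Real.rpow_nonneg (norm_nonneg u) s).trans (le_max_left _ _)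
  have hsc : |‖u‖ ^ s - ‖v‖ ^ s| * ‖v‖ ≤ |s| * max (‖u‖ ^ s) (‖v‖ ^ s) * (‖u‖ - ‖v‖) := by
    by_cases hv : v = 0
    · subst hv
      simp only [norm_zero, mul_zero, sub_zero] at hM ⊢
      positivity
    · exact aux_scal2 _ _ s (norm_pos_iff.2 hv) huv
  have e : (‖u‖ ^ s) • u - (‖v‖ ^ s) • v = (‖u‖ ^ s) • (u - v) + (‖u‖ ^ s - ‖v‖ ^ s) • v := by
    module
  rw [e]
  refine (norm_add_le _ _).trans ?_
  rw [norm_smul, norm_smul, Real.norm_of_nonneg (Real.rpow_nonneg (norm_nonneg u) s), Real.norm_eq_abs]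
  have h1 : ‖u‖ ^ s * ‖u - v‖ ≤ max (‖u‖ ^ s) (‖v‖ ^ s) * ‖u - v‖ :=
    mul_le_mul_of_nonneg_right (le_max_left _ _) (norm_nonneg _)
  have h2 : |s| * max (‖u‖ ^ s) (‖v‖ ^ s) * (‖u‖ - ‖v‖) ≤ |s| * max (‖u‖ ^ s) (‖v‖ ^ s) * ‖u - v‖ :=
    mul_le_mul_of_nonneg_left (norm_sub_norm_le u v) (by positivity)
  linarith

open Set in
theorem aux_main_s15 {X : Type*} [NormedAddCommGroup X] [NormedSpace ℝ X] (s : ℝ) (a b : X)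
    (h : 0 ≤ s ∨ ∀ t : ℝ, (1 - t) • a + t • b ≠ 0) :
    ‖(‖a‖ ^ s) • a - (‖b‖ ^ s) • b‖ ≤
      (1 + |s|) * ‖a - b‖ * ∫ t in (0:ℝ)..1, ‖(1 - t) • a + t • b‖ ^ s := by
  have hc : Continuous (fun t : ℝ => (1 - t) • a + t • b) := by fun_prop
  have hg : Continuous (fun t : ℝ => ‖(1 - t) • a + t • b‖ ^ s) := by
    apply hc.norm.rpow_const
    intro t
    rcases h with h | h
    · exact Or.inr h
    · exact Or.inl (norm_ne_zero_iff.2 (h t))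
  have := aux_path (fun t : ℝ => (‖(1 - t) • a + t • b‖ ^ s) • ((1 - t) • a + t • b))
    (fun t : ℝ => ‖(1 - t) • a + t • b‖ ^ s) hg.continuousOn ((1 + |s|) * ‖a - b‖) (by positivity)
    (hg.smul hc).continuousOn ?_
  · simpa [norm_sub_rev] using this
  · intro t _ z _
    refine (aux_vec s _ _ (h.imp id (fun h => ⟨h z, h t⟩))).trans (le_of_eq ?_)
    have e : (1 - z) • a + z • b - ((1 - t) • a + t • b) = (z - t) • (b - a) := by module
    rw [e, norm_smul, Real.norm_eq_abs, norm_sub_rev b a]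
    ring

theorem aux_pow {X : Type*} [NormedAddCommGroup X] [NormedSpace ℝ X]
    (p q : ℝ) (hq : q ≠ 0) (x : X) (hx : x ≠ 0) :
    (‖(‖x‖ ^ (q - 1)) • x‖ ^ (p / q - 1)) • ((‖x‖ ^ (q - 1)) • x) = (‖x‖ ^ (p - 1)) • x := by
  have hp : 0 < ‖x‖ := norm_pos_iff.2 hx
  have h1 : ‖(‖x‖ ^ (q - 1)) • x‖ = ‖x‖ ^ q := by
    rw [norm_smul, Real.norm_of_nonneg (Real.rpow_nonneg hp.le _)]
    nth_rewrite 2 [← Real.rpow_one ‖x‖]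
    rw [← Real.rpow_add hp]; congr 1; ring
  rw [h1, smul_smul, ← Real.rpow_mul hp.le, ← Real.rpow_add hp]
  congr 2
  field_simp
  ring


theorem stmt_15 {X : Type*} [NormedAddCommGroup X] [NormedSpace ℝ X]
    (p q : ℝ) (hq : q ≠ 0) (x y : X) (hx : x ≠ 0) (hy : y ≠ 0) :
    (1 ≤ p / q →
      alphaD p x y ≤ (p / q) * alphaD q x y *
        ∫ t in (0 : ℝ)..1,
          ‖(1 - t) • ((‖x‖ ^ (q - 1)) • x) + t • ((‖y‖ ^ (q - 1)) • y)‖ ^ (p / q - 1)) ∧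
    (p / q < 1 → LinearIndependent ℝ ![x, y] →
      alphaD p x y ≤ ((2 * q - p) / q) * alphaD q x y *
        ∫ t in (0 : ℝ)..1,
          ‖(1 - t) • ((‖x‖ ^ (q - 1)) • x) + t • ((‖y‖ ^ (q - 1)) • y)‖ ^ (p / q - 1)) := by
  have main := aux_main_s15 (p / q - 1) ((‖x‖ ^ (q - 1)) • x) ((‖y‖ ^ (q - 1)) • y)
  rw [aux_pow p q hq x hx, aux_pow p q hq y hy] at main
  constructor
  · intro h
    have h0 : 0 ≤ p / q - 1 := by linarith
    have := main (Or.inl h0)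
    rw [abs_of_nonneg h0, add_sub_cancel] at this
    exact this
  · intro h hl
    have h0 : p / q - 1 < 0 := by linarith
    have := main (Or.inr ?_)
    · rw [abs_of_neg h0] at this
      have e : 1 + -(p / q - 1) = (2 * q - p) / q := by field_simp; ring
      rw [e] at this
      exact this
    · intro t ht
      rw [LinearIndependent.pair_iff] at hl
      rw [smul_smul, smul_smul] at ht
      obtain ⟨h1, h2⟩ := hl _ _ ht
      have hx' := (Real.rpow_pos_of_pos (norm_pos_iff.2 hx) (q - 1)).ne'
      have hy' := (Real.rpow_pos_of_pos (norm_pos_iff.2 hy) (q - 1)).ne'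
      have h3 := (mul_eq_zero.1 h1).resolve_right hx'
      have h4 := (mul_eq_zero.1 h2).resolve_right hy'
      linarith
end

section
/- Let p, q be real numbers with q ≠ 0 and p/q ≥ 1, and let x, y ∈ X be nonzero with ‖x‖ ≠ ‖y‖. Then α_p[x,y] ≤ (p/q) · α_q[x,y] · ∫₀¹ ‖ (1−t)·‖x‖^(q−1) • x + t·‖y‖^(q−1) • y ‖^(p/q − 1) dt ≤ ((‖y‖^p − ‖x‖^p)/(‖y‖^q − ‖x‖^q)) · α_q[x,y]. -/
open Set Filter Topology in
theorem aux_young (r : ℝ) (hr : 1 ≤ r) (Z W : ℝ) (hW : 0 ≤ W) (hZ : W ≤ Z) :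
    (Z ^ (r - 1) - W ^ (r - 1)) * W ≤ (r - 1) * Z ^ (r - 1) * (Z - W) := by
  rcases (hW.trans hZ).eq_or_lt with h | h
  · have : W = 0 := by linarith
    subst this; subst h; simp
  have hB := one_add_mul_self_le_rpow_one_add (s := W / Z - 1)
    (by have : 0 ≤ W / Z := by positivity
        linarith) hr
  rw [show 1 + (W / Z - 1) = W / Z by ring, Real.div_rpow hW h.le, le_div_iff₀ (by positivity)] at hB
  have hZr : Z ^ r = Z ^ (r - 1) * Z := by
    rw [← Real.rpow_add_one h.ne']; ring_nf
  have hWr : W ^ r = W ^ (r - 1) * W := by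
    rcases hW.eq_or_lt with h0 | h0
    · rw [← h0, Real.zero_rpow (by linarith)]; simp
    · rw [← Real.rpow_add_one h0.ne']; ring_nf
  have e : (1 + r * (W / Z - 1)) * Z ^ r = Z ^ (r - 1) * (Z + r * (W - Z)) := by
    rw [hZr]; field_simp
  rw [e, hWr] at hB
  linarith

theorem aux_lip1 {X : Type*} [NormedAddCommGroup X] [NormedSpace ℝ X] (r : ℝ) (hr : 1 ≤ r)
    (z w : X) (h : ‖w‖ ≤ ‖z‖) :
    ‖‖z‖ ^ (r - 1) • z - ‖w‖ ^ (r - 1) • w‖ ≤ r * ‖z‖ ^ (r - 1) * ‖z - w‖ := by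
  have e : ‖z‖ ^ (r - 1) • z - ‖w‖ ^ (r - 1) • w
      = ‖z‖ ^ (r - 1) • (z - w) + (‖z‖ ^ (r - 1) - ‖w‖ ^ (r - 1)) • w := by
    rw [smul_sub, sub_smul]; abel
  have hp : 0 ≤ ‖z‖ ^ (r - 1) := by positivity
  have hm : ‖w‖ ^ (r - 1) ≤ ‖z‖ ^ (r - 1) :=
    Real.rpow_le_rpow (norm_nonneg _) h (by linarith)
  rw [e]
  refine (norm_add_le _ _).trans ?_
  rw [norm_smul, norm_smul, Real.norm_of_nonneg hp, Real.norm_of_nonneg (by linarith)]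
  have h1 := aux_young r hr ‖z‖ ‖w‖ (norm_nonneg _) h
  have h2 : (r - 1) * ‖z‖ ^ (r - 1) * (‖z‖ - ‖w‖) ≤ (r - 1) * ‖z‖ ^ (r - 1) * ‖z - w‖ :=
    mul_le_mul_of_nonneg_left (norm_sub_norm_le z w) (mul_nonneg (by linarith) hp)
  linarith

theorem aux_lip {X : Type*} [NormedAddCommGroup X] [NormedSpace ℝ X] (r : ℝ) (hr : 1 ≤ r)
    (z w : X) :
    ‖‖z‖ ^ (r - 1) • z - ‖w‖ ^ (r - 1) • w‖ ≤ r * (max ‖z‖ ‖w‖) ^ (r - 1) * ‖z - w‖ := by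
  rcases le_total ‖w‖ ‖z‖ with h | h
  · rw [max_eq_left h]; exact aux_lip1 r hr z w h
  · rw [max_eq_right h, norm_sub_rev, norm_sub_rev z w]; exact aux_lip1 r hr w z h

open Set Filter Topology in
theorem aux_first {X : Type*} [NormedAddCommGroup X] [NormedSpace ℝ X] (r : ℝ) (hr : 1 ≤ r)
    (u v : X) :
    ‖‖u‖ ^ (r - 1) • u - ‖v‖ ^ (r - 1) • v‖ ≤
      r * ‖u - v‖ * ∫ t in (0 : ℝ)..1, ‖(1 - t) • u + t • v‖ ^ (r - 1) := by
  have hr' : 0 ≤ r - 1 := by linarith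
  set γ : ℝ → X := fun t => (1 - t) • u + t • v with hγ
  have cγ : Continuous γ := by fun_prop
  have cn : Continuous fun t => ‖γ t‖ ^ (r - 1) :=
    cγ.norm.rpow_const (fun _ => Or.inr hr')
  set F : ℝ → X := fun t => ‖γ t‖ ^ (r - 1) • γ t with hF
  have cF : Continuous F := cn.smul cγ
  set B : ℝ → ℝ := fun s => r * ‖u - v‖ * ∫ t in (0 : ℝ)..s, ‖γ t‖ ^ (r - 1) with hBd
  have dB : ∀ s, HasDerivAt B (r * ‖u - v‖ * ‖γ s‖ ^ (r - 1)) s := fun s =>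
    (intervalIntegral.integral_hasDerivAt_right (cn.intervalIntegrable _ _)
      (cn.stronglyMeasurableAtFilter _ _) cn.continuousAt).const_mul _
  have key := image_le_of_liminf_slope_right_le_deriv_boundary
    (f := fun t => ‖F t - F 0‖) (a := 0) (b := 1) (B := B)
    (B' := fun s => r * ‖u - v‖ * ‖γ s‖ ^ (r - 1))
    (by fun_prop) (by simp [hBd])
    (fun s _ => (dB s).continuousAt.continuousWithinAt)
    (fun s _ => (dB s).hasDerivWithinAt)
    (by
      intro t _ c hc
      apply Eventually.frequently
      have cM : Continuous fun z => r * ‖u - v‖ * (max ‖γ z‖ ‖γ t‖) ^ (r - 1) :=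
        continuous_const.mul ((cγ.norm.max continuous_const).rpow_const (fun _ => Or.inr hr'))
      have hev : ∀ᶠ z in 𝓝 t, r * ‖u - v‖ * (max ‖γ z‖ ‖γ t‖) ^ (r - 1) < c := by
        apply cM.continuousAt.eventually_lt continuousAt_const
        simpa using hc
      filter_upwards [hev.filter_mono nhdsWithin_le_nhds, self_mem_nhdsWithin] with z hz hzt
      have hzt' : 0 < z - t := sub_pos.2 hzt
      refine lt_of_le_of_lt ?_ hz
      rw [slope_def_field, div_le_iff₀ hzt']
      have h1 : ‖F z - F 0‖ - ‖F t - F 0‖ ≤ ‖F z - F t‖ := by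
        have := norm_sub_norm_le (F z - F 0) (F t - F 0)
        simpa using this
      have h2 := aux_lip r hr (γ z) (γ t)
      have h3 : γ z - γ t = (z - t) • (v - u) := by
        simp only [hγ]; module
      rw [h3, norm_smul, Real.norm_of_nonneg hzt'.le, norm_sub_rev v u] at h2
      refine h1.trans (h2.trans (le_of_eq ?_))
      ring)
  have := key (x := 1) (by simp)
  simp only [hF, hBd] at this
  rw [norm_sub_rev]
  simpa [hγ] using this

theorem aux_second {X : Type*} [NormedAddCommGroup X] [NormedSpace ℝ X] (r : ℝ) (hr : 1 ≤ r)
    (u v : X) (huv : ‖u‖ ≠ ‖v‖) :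
    r * ∫ t in (0 : ℝ)..1, ‖(1 - t) • u + t • v‖ ^ (r - 1) ≤
      (‖v‖ ^ r - ‖u‖ ^ r) / (‖v‖ - ‖u‖) := by
  have hr' : 0 ≤ r - 1 := by linarith
  have cn : Continuous fun t : ℝ => ‖(1 - t) • u + t • v‖ ^ (r - 1) :=
    Continuous.rpow_const (by fun_prop) (fun _ => Or.inr hr')
  have cm : Continuous fun t : ℝ => ((1 - t) * ‖u‖ + t * ‖v‖) ^ (r - 1) :=
    Continuous.rpow_const (by fun_prop) (fun _ => Or.inr hr')
  have h1 : ∫ t in (0 : ℝ)..1, ‖(1 - t) • u + t • v‖ ^ (r - 1) ≤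
      ∫ t in (0 : ℝ)..1, ((1 - t) * ‖u‖ + t * ‖v‖) ^ (r - 1) := by
    apply intervalIntegral.integral_mono_on zero_le_one (cn.intervalIntegrable _ _)
      (cm.intervalIntegrable _ _)
    intro t ht
    apply Real.rpow_le_rpow (norm_nonneg _) _ hr'
    refine (norm_add_le _ _).trans ?_
    rw [norm_smul, norm_smul, Real.norm_of_nonneg (sub_nonneg.2 ht.2), Real.norm_of_nonneg ht.1]
  have hne : ‖v‖ - ‖u‖ ≠ 0 := sub_ne_zero.2 huv.symm
  have h2 : ∫ t in (0 : ℝ)..1, r * ((1 - t) * ‖u‖ + t * ‖v‖) ^ (r - 1)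
      = ‖v‖ ^ r / (‖v‖ - ‖u‖) - ‖u‖ ^ r / (‖v‖ - ‖u‖) := by
    have := intervalIntegral.integral_eq_sub_of_hasDerivAt (a := (0:ℝ)) (b := 1)
      (f := fun t => ((1 - t) * ‖u‖ + t * ‖v‖) ^ r / (‖v‖ - ‖u‖))
      (f' := fun t => r * ((1 - t) * ‖u‖ + t * ‖v‖) ^ (r - 1))
      (by
        intro t _
        have hd : HasDerivAt (fun t : ℝ => (1 - t) * ‖u‖ + t * ‖v‖) (‖v‖ - ‖u‖) t := by
          have := (((hasDerivAt_id t).const_sub 1).mul_const ‖u‖).add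
            ((hasDerivAt_id t).mul_const ‖v‖)
          exact this.congr_deriv (by ring)
        exact ((hd.rpow_const (p := r) (Or.inr hr)).div_const (‖v‖ - ‖u‖)).congr_deriv
          (by field_simp))
      ((continuous_const.mul cm).intervalIntegrable _ _)
    simpa using this
  rw [intervalIntegral.integral_const_mul] at h2
  rw [sub_div, ← h2]
  exact mul_le_mul_of_nonneg_left h1 (by linarith)

theorem stmt_16 {X : Type*} [NormedAddCommGroup X] [NormedSpace ℝ X]
    (p q : ℝ) (hq : q ≠ 0) (hpq : 1 ≤ p / q)
    (x y : X) (hx : x ≠ 0) (hy : y ≠ 0) (hxy : ‖x‖ ≠ ‖y‖) :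
    alphaD p x y ≤ (p / q) * alphaD q x y *
      ∫ t in (0 : ℝ)..1,
        ‖(1 - t) • ((‖x‖ ^ (q - 1)) • x) + t • ((‖y‖ ^ (q - 1)) • y)‖ ^ (p / q - 1) ∧
    (p / q) * alphaD q x y *
      (∫ t in (0 : ℝ)..1,
        ‖(1 - t) • ((‖x‖ ^ (q - 1)) • x) + t • ((‖y‖ ^ (q - 1)) • y)‖ ^ (p / q - 1)) ≤
      ((‖y‖ ^ p - ‖x‖ ^ p) / (‖y‖ ^ q - ‖x‖ ^ q)) * alphaD q x y := by
  have nrm : ∀ z : X, z ≠ 0 → ‖(‖z‖ ^ (q - 1)) • z‖ = ‖z‖ ^ q := by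
    intro z hz
    have : 0 < ‖z‖ := norm_pos_iff.2 hz
    rw [norm_smul, Real.norm_of_nonneg (by positivity), ← Real.rpow_add_one this.ne']
    ring_nf
  have pw : ∀ z : X, (‖z‖ ^ q) ^ (p / q) = ‖z‖ ^ p := by
    intro z
    rw [← Real.rpow_mul (norm_nonneg _), mul_div_cancel₀ _ hq]
  have vec : ∀ z : X, z ≠ 0 →
      ‖(‖z‖ ^ (q - 1)) • z‖ ^ (p / q - 1) • ((‖z‖ ^ (q - 1)) • z) = ‖z‖ ^ (p - 1) • z := by
    intro z hz
    have : 0 < ‖z‖ := norm_pos_iff.2 hz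
    rw [nrm z hz, smul_smul, ← Real.rpow_mul this.le, ← Real.rpow_add this]
    congr 2
    field_simp
    ring
  have hne : ‖(‖x‖ ^ (q - 1)) • x‖ ≠ ‖(‖y‖ ^ (q - 1)) • y‖ := by
    rw [nrm x hx, nrm y hy]
    intro h
    exact hxy ((Real.rpow_left_inj (norm_nonneg _) (norm_nonneg _) hq).1 h)
  constructor
  · have := aux_first (p / q) hpq ((‖x‖ ^ (q - 1)) • x) ((‖y‖ ^ (q - 1)) • y)
    rw [vec x hx, vec y hy] at this
    exact this
  · have := aux_second (p / q) hpq ((‖x‖ ^ (q - 1)) • x) ((‖y‖ ^ (q - 1)) • y) hne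
    rw [nrm x hx, nrm y hy, pw, pw] at this
    have h2 := mul_le_mul_of_nonneg_right this
      (show 0 ≤ alphaD q x y from norm_nonneg _)
    rw [mul_right_comm]
    exact h2
end

section
/- Let X be a real inner product space and let x, y ∈ X satisfy ‖y‖•x ≠ ‖x‖•y (in particular x, y are nonzero). Then the error of the Cauchy–Schwarz inequality satisfies √(‖x‖²‖y‖² − ⟨x,y⟩²) ≤ 2‖x‖‖y‖‖x − y‖² / ‖ ‖y‖•x − ‖x‖•y ‖. -/
open scoped RealInnerProductSpace

theorem stmt_17 {X : Type*} [NormedAddCommGroup X] [InnerProductSpace ℝ X]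
    (x y : X) (hxy : ‖y‖ • x ≠ ‖x‖ • y) :
    Real.sqrt (‖x‖ ^ 2 * ‖y‖ ^ 2 - ⟪x, y⟫ ^ 2) ≤
      2 * ‖x‖ * ‖y‖ * ‖x - y‖ ^ 2 / ‖‖y‖ • x - ‖x‖ • y‖ := by
  have hD : 0 < ‖‖y‖ • x - ‖x‖ • y‖ := norm_pos_iff.mpr (sub_ne_zero.mpr hxy)
  have hD2 : ‖‖y‖ • x - ‖x‖ • y‖ ^ 2 = 2 * (‖x‖ * ‖y‖) * (‖x‖ * ‖y‖ - ⟪x, y⟫) := by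
    rw [norm_sub_sq_real, real_inner_smul_left, real_inner_smul_right, norm_smul, norm_smul,
      norm_norm, norm_norm]
    ring
  have hE := norm_sub_sq_real x y
  have h1 : ⟪x, y⟫ ≤ ‖x‖ * ‖y‖ := real_inner_le_norm x y
  have h2 : -(‖x‖ * ‖y‖) ≤ ⟪x, y⟫ := (abs_le.mp (abs_real_inner_le_norm x y)).1
  have hp : 0 ≤ ‖x‖ * ‖y‖ := by positivity
  have h3 : ‖x‖ * ‖y‖ - ⟪x, y⟫ ≤ ‖x - y‖ ^ 2 := by
    nlinarith [sq_nonneg (‖x‖ - ‖y‖)]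
  rw [le_div_iff₀ hD]
  refine (abs_le_of_sq_le_sq' ?_ (by positivity)).2
  rw [mul_pow, Real.sq_sqrt (by nlinarith), hD2]
  generalize ‖x - y‖ ^ 2 = e at *
  have h4 : (‖x‖ * ‖y‖ - ⟪x, y⟫) ^ 2 ≤ e ^ 2 := pow_le_pow_left₀ (by linarith) h3 2
  calc _ = 2 * (‖x‖ * ‖y‖) * (‖x‖ * ‖y‖ + ⟪x, y⟫) * (‖x‖ * ‖y‖ - ⟪x, y⟫) ^ 2 := by ring
    _ ≤ 2 * (‖x‖ * ‖y‖) * (2 * (‖x‖ * ‖y‖)) * e ^ 2 := by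
      gcongr
      linarith
    _ = _ := by ring
end

section
/- Let X be a real normed linear space and let p be a real number with p > 1. Then the norm of X satisfies the parallelogram law (equivalently, X is an inner product space) if and only if for all nonzero x, y ∈ X, α_p[x,y] ≥ β_p[x,y]. Dually, if p < 1, the norm satisfies the parallelogram law if and only if for all nonzero x, y ∈ X, α_p[x,y] ≤ β_p[x,y]. -/
/-- The norm satisfies the parallelogram law; by the Jordan–von Neumann theorem this
holds precisely when the norm is induced by an inner product. -/
def ParallelogramLaw (X : Type*) [NormedAddCommGroup X] : Prop :=
  ∀ x y : X, ‖x + y‖ ^ 2 + ‖x - y‖ ^ 2 = 2 * ‖x‖ ^ 2 + 2 * ‖y‖ ^ 2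

section helpers
variable {X : Type*} [NormedAddCommGroup X] [NormedSpace ℝ X]

/-- Isosceles orthogonality implies Birkhoff orthogonality. -/
def IsoB (X : Type*) [NormedAddCommGroup X] [NormedSpace ℝ X] : Prop :=
  ∀ u v : X, ‖u‖ = ‖v‖ → ∀ s : ℝ, ‖u + v‖ ≤ ‖(u + v) + s • (u - v)‖

def BO (x y : X) : Prop := ∀ s : ℝ, ‖x‖ ≤ ‖x + s • y‖

lemma BO.smul {x y : X} (h : BO x y) (c : ℝ) : BO x (c • y) := by
  intro s
  rw [smul_smul]
  exact h _

lemma BO.of_smul {x y : X} {c : ℝ} (hc : c ≠ 0) (h : BO x (c • y)) : BO x y := by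
  intro s
  have := h (s / c)
  rwa [smul_smul, div_mul_cancel₀ _ hc] at this

lemma BO.left {x y : X} (h : BO x y) (c : ℝ) : BO (c • x) y := by
  intro s
  by_cases hc : c = 0
  · simp [hc]
  have h1 := h (s / c)
  have : c • x + s • y = c • (x + (s / c) • y) := by
    rw [smul_add, smul_smul, mul_div_cancel₀ _ hc]
  rw [this, norm_smul, norm_smul]
  exact mul_le_mul_of_nonneg_left h1 (norm_nonneg _)

lemma step (hB : IsoB X) {x y : X} (h : BO x y) (h1 : ‖x + y‖ = ‖x‖) : ‖x + (2:ℝ) • y‖ = ‖x‖ := by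
  by_contra hne
  have hlt : ‖x‖ < ‖x + (2:ℝ) • y‖ := lt_of_le_of_ne (h 2) (Ne.symm hne)
  by_cases hx : x = 0
  · subst hx
    simp at h1
    subst h1
    simp at hlt
  have hn : 0 < ‖x‖ := norm_pos_iff.mpr hx
  obtain ⟨n, hnn⟩ : ∃ n, n = ‖x‖ := ⟨_, rfl⟩
  obtain ⟨N, hNN⟩ : ∃ N, N = ‖x + (2:ℝ) • y‖ := ⟨_, rfl⟩
  rw [← hnn] at hn
  rw [← hnn, ← hNN] at hlt
  obtain ⟨r, hr⟩ : ∃ r, r = n / N := ⟨_, rfl⟩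
  have hN : 0 < N := by linarith
  have hr0 : 0 < r := by rw [hr]; positivity
  have hr1 : r < 1 := by rw [hr]; exact (div_lt_one hN).mpr hlt
  have hv : ‖x‖ = ‖r • (x + (2:ℝ) • y)‖ := by
    rw [norm_smul, ← hNN, ← hnn, Real.norm_eq_abs, abs_of_pos hr0, hr, div_mul_cancel₀ _ hN.ne']
  obtain ⟨σ, hσ⟩ : ∃ σ, σ = (1 - r) / (1 + r) := ⟨_, rfl⟩
  have hσ0 : 0 < σ := by rw [hσ]; apply div_pos <;> linarith
  have hσ1 : σ * (1 + r) = 1 - r := by rw [hσ]; field_simp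
  have key := hB x _ hv (-σ)
  have e1 : x + r • (x + (2:ℝ) • y) = (1 + r) • (x + (2 * r / (1 + r)) • y) := by
    have : (1 + r) * (2 * r / (1 + r)) = 2 * r := by field_simp
    rw [smul_add (1 + r), smul_smul, this]
    module
  have e2 : x + r • (x + (2:ℝ) • y) + (-σ) • (x - r • (x + (2:ℝ) • y))
      = (1 + r - σ * (1 - r) - (2 * r + 2 * r * σ)) • x + (2 * r + 2 * r * σ) • (x + y) := by
    module
  have b1 : (1 + r) * n ≤ ‖x + r • (x + (2:ℝ) • y)‖ := by
    rw [e1, norm_smul, Real.norm_eq_abs, abs_of_pos (by linarith), hnn]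
    exact mul_le_mul_of_nonneg_left (h _) (by linarith)
  rw [e2] at key
  have b2 := norm_add_le ((1 + r - σ * (1 - r) - (2 * r + 2 * r * σ)) • x)
    ((2 * r + 2 * r * σ) • (x + y))
  rw [norm_smul, norm_smul, h1, ← hnn, Real.norm_eq_abs, Real.norm_eq_abs,
    abs_of_nonneg (by nlinarith), abs_of_nonneg (by positivity)] at b2
  have : 0 < σ * (1 - r) * n := mul_pos (mul_pos hσ0 (by linarith)) hn
  nlinarith

lemma uniq1 (hB : IsoB X) {x y : X} (h : BO x y) (h1 : ‖x + y‖ = ‖x‖) : y = 0 := by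
  have hk : ∀ k : ℕ, ‖x + ((2:ℝ) ^ k) • y‖ = ‖x‖ := by
    intro k
    induction k with
    | zero => simpa using h1
    | succ k ih =>
      have := step hB (h.smul (2 ^ k)) ih
      rwa [smul_smul, ← pow_succ'] at this
  by_contra hy
  have hy : 0 < ‖y‖ := norm_pos_iff.mpr hy
  obtain ⟨k, hk'⟩ := pow_unbounded_of_one_lt (2 * ‖x‖ / ‖y‖) (one_lt_two : (1:ℝ) < 2)
  rw [div_lt_iff₀ hy] at hk'
  have h2 : ‖((2:ℝ) ^ k) • y‖ = 2 ^ k * ‖y‖ := by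
    rw [norm_smul, Real.norm_eq_abs, abs_of_pos (by positivity)]
  have h3 := norm_sub_le (x + ((2:ℝ) ^ k) • y) x
  rw [add_sub_cancel_left, h2, hk k] at h3
  linarith

lemma uniq (hB : IsoB X) {x y : X} (hy : y ≠ 0) (h : BO x y) {t : ℝ} (h1 : ‖x + t • y‖ = ‖x‖) :
    t = 0 := by
  have := uniq1 hB (h.smul t) h1
  simpa [hy] using this

lemma sym_pos (hB : IsoB X) {x y : X} (h : BO x y) {s : ℝ} (hs : 0 < s) :
    ‖x + s • y‖ = ‖x - s • y‖ := by
  by_cases hy : y = 0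
  · simp [hy]
  have hy' : 0 < ‖y‖ := norm_pos_iff.mpr hy
  obtain ⟨c, hc⟩ : ∃ c, c = ‖x + s • y‖ := ⟨_, rfl⟩
  have hxc : ‖x‖ ≤ c := hc ▸ h s
  have hT : 0 ≤ (‖x‖ + c) / ‖y‖ := by have := norm_nonneg x; apply div_nonneg <;> linarith
  have hcont : ContinuousOn (fun t : ℝ => ‖x - t • y‖) (Set.Icc 0 ((‖x‖ + c) / ‖y‖)) := by fun_prop
  have hmem : c ∈ Set.Icc ((fun t : ℝ => ‖x - t • y‖) 0)
      ((fun t : ℝ => ‖x - t • y‖) ((‖x‖ + c) / ‖y‖)) := by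
    refine ⟨by simpa using hxc, ?_⟩
    have h3 := norm_sub_norm_le (((‖x‖ + c) / ‖y‖) • y) x
    rw [norm_smul, Real.norm_eq_abs, abs_of_nonneg hT, div_mul_cancel₀ _ hy'.ne', norm_sub_rev] at h3
    simp only
    linarith
  obtain ⟨s', hs', hs'c⟩ := intermediate_value_Icc hT hcont hmem
  simp only at hs'c
  have h0 := hs'.1
  have hb : BO ((x + s • y) + (x - s' • y)) ((x + s • y) - (x - s' • y)) :=
    hB _ _ (by rw [hs'c, hc])
  have e1 : (x + s • y) - (x - s' • y) = (s + s') • y := by module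
  have e2 : (1/2 : ℝ) • ((x + s • y) + (x - s' • y)) = x + ((s - s') / 2) • y := by module
  rw [e1] at hb
  have hb2 := (hb.of_smul (by linarith)).left (1/2)
  rw [e2] at hb2
  have h4 := hb2 (-((s - s') / 2))
  have e3 : x + ((s - s') / 2) • y + (-((s - s') / 2)) • y = x := by module
  rw [e3] at h4
  have h5 := uniq hB hy h (le_antisymm h4 (h _))
  have : s' = s := by linarith
  rw [this] at hs'c
  rw [hs'c, hc]

lemma sym (hB : IsoB X) {x y : X} (h : BO x y) (c s : ℝ) :
    ‖c • x + s • y‖ = ‖c • x - s • y‖ := by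
  have h := h.left c
  rcases lt_trichotomy s 0 with hs | hs | hs
  · have := sym_pos hB h (s := -s) (by linarith)
    simp only [neg_smul, sub_neg_eq_add] at this
    rw [← this, sub_eq_add_neg]
  · simp [hs]
  · exact sym_pos hB h hs

lemma BO.symm (hB : IsoB X) {x y : X} (h : BO x y) : BO y x := by
  have h1 := sym hB h 1 1
  simp only [one_smul] at h1
  have h2 : BO ((x + y) + -(x - y)) ((x + y) - -(x - y)) := hB _ _ (by rw [norm_neg, h1])
  have e1 : (x + y) + -(x - y) = (2:ℝ) • y := by module
  have e2 : (x + y) - -(x - y) = (2:ℝ) • x := by module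
  rw [e1, e2] at h2
  have h3 := (h2.of_smul two_ne_zero).left (1/2)
  rwa [smul_smul, show (1/2 * 2 : ℝ) = 1 by norm_num, one_smul] at h3

lemma ficken (hB : IsoB X) {u v : X} (h : ‖u‖ = ‖v‖) (a b : ℝ) :
    ‖a • u + b • v‖ = ‖b • u + a • v‖ := by
  have h1 : BO (u + v) (u - v) := hB u v h
  have h2 := sym hB h1 ((a + b) / 2) ((a - b) / 2)
  have e1 : ((a + b) / 2) • (u + v) + ((a - b) / 2) • (u - v) = a • u + b • v := by module
  have e2 : ((a + b) / 2) • (u + v) - ((a - b) / 2) • (u - v) = b • u + a • v := by module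
  rwa [e1, e2] at h2

lemma strict_even (hB : IsoB X) {e f : X} (he : e ≠ 0) (h : BO f e) {s s' b : ℝ}
    (hs : 0 ≤ s) (hs' : 0 ≤ s') (heq : ‖s • e + b • f‖ = ‖s' • e + b • f‖) : s = s' := by
  by_contra hne
  have hb : BO ((s • e + b • f) + (s' • e + b • f)) ((s • e + b • f) - (s' • e + b • f)) :=
    hB _ _ heq
  have e1 : (s • e + b • f) - (s' • e + b • f) = (s - s') • e := by module
  have e2 : (1/2 : ℝ) • ((s • e + b • f) + (s' • e + b • f)) = b • f + ((s + s') / 2) • e := by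
    module
  rw [e1] at hb
  have hb2 := (hb.of_smul (sub_ne_zero.mpr hne)).left (1/2)
  rw [e2] at hb2
  have h4 := hb2 (-((s + s') / 2))
  have e3 : b • f + ((s + s') / 2) • e + (-((s + s') / 2)) • e = b • f := by module
  rw [e3] at h4
  have h5 := uniq hB he (h.left b) (le_antisymm h4 (h.left b _))
  apply hne
  linarith

lemma pyth_unit (hB : IsoB X) {e f : X} (he : ‖e‖ = 1) (hf : ‖f‖ = 1) (h : BO e f) (a b : ℝ) :
    ‖a • e + b • f‖ ^ 2 = a ^ 2 + b ^ 2 := by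
  by_cases hb : b = 0
  · simp [hb, norm_smul, he]
  have he0 : e ≠ 0 := by intro h0; simp [h0] at he
  have hfe := h.symm hB
  obtain ⟨n, hn⟩ : ∃ n, n = ‖a • e + b • f‖ := ⟨_, rfl⟩
  rw [← hn]
  have hna : |a| ≤ n := by
    have := h.left a b
    rwa [norm_smul, he, mul_one, Real.norm_eq_abs, ← hn] at this
  have hnb : |b| ≤ n := by
    have := hfe.left b a
    rwa [norm_smul, hf, mul_one, Real.norm_eq_abs, add_comm, ← hn] at this
  have hn0 : 0 < n := lt_of_lt_of_le (abs_pos.mpr hb) hnb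
  have hc : 0 ≤ n ^ 2 - a ^ 2 := by
    have := sq_le_sq' (by linarith [abs_nonneg a]) hna
    rw [sq_abs] at this
    linarith
  -- Ficken for e and w
  have hF := ficken hB (u := n • e) (v := a • e + b • f)
    (by rw [norm_smul, he, Real.norm_eq_abs, abs_of_pos hn0, mul_one, hn]) (-a) n
  have e1 : (-a) • n • e + n • (a • e + b • f) = (n * b) • f := by module
  have e2 : n • n • e + (-a) • (a • e + b • f) = (n ^ 2 - a ^ 2) • e - (a * b) • f := by module
  rw [e1, e2, ← sym hB h, norm_smul, hf, mul_one, Real.norm_eq_abs, abs_mul, abs_of_pos hn0] at hF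
  have hG : ‖(b ^ 2) • e + (a * b) • f‖ = n * |b| := by
    have : (b ^ 2) • e + (a * b) • f = b • (b • e + a • f) := by module
    rw [this, norm_smul, ficken hB (he.trans hf.symm) b a, ← hn, Real.norm_eq_abs, mul_comm]
  have := strict_even hB he0 hfe hc (sq_nonneg b) (hF.symm.trans hG.symm)
  linarith

lemma pyth (hB : IsoB X) {x y : X} (h : BO x y) (a b : ℝ) :
    ‖a • x + b • y‖ ^ 2 = a ^ 2 * ‖x‖ ^ 2 + b ^ 2 * ‖y‖ ^ 2 := by
  by_cases hx : x = 0
  · simp [hx, norm_smul, mul_pow]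
  by_cases hy : y = 0
  · simp [hy, norm_smul, mul_pow]
  have hx' : ‖x‖ ≠ 0 := norm_ne_zero_iff.mpr hx
  have hy' : ‖y‖ ≠ 0 := norm_ne_zero_iff.mpr hy
  have := pyth_unit hB (e := ‖x‖⁻¹ • x) (f := ‖y‖⁻¹ • y) (by simp [norm_smul, hx'])
    (by simp [norm_smul, hy']) ((h.left _).smul _) (a * ‖x‖) (b * ‖y‖)
  rw [smul_smul, smul_smul, mul_assoc, mul_assoc, mul_inv_cancel₀ hx', mul_inv_cancel₀ hy',
    mul_one, mul_one] at this
  rw [this]; ring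

lemma exists_min (x z : X) (hx : x ≠ 0) : ∃ m : ℝ, BO (z - m • x) x := by
  have hx' : 0 < ‖x‖ := norm_pos_iff.mpr hx
  have hcont : Continuous (fun m : ℝ => ‖z - m • x‖) := by fun_prop
  have htend : Filter.Tendsto (fun m : ℝ => ‖z - m • x‖) (Filter.cocompact ℝ) Filter.atTop := by
    have h1 : Filter.Tendsto (fun m : ℝ => ‖m‖ * ‖x‖ - ‖z‖) (Filter.cocompact ℝ) Filter.atTop :=
      Filter.tendsto_atTop_add_const_right _ _
        ((tendsto_norm_cocompact_atTop (E := ℝ)).atTop_mul_const hx')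
    refine Filter.tendsto_atTop_mono (fun m => ?_) h1
    rw [← norm_smul, norm_sub_rev]
    exact norm_sub_norm_le _ _
  obtain ⟨m, hm⟩ := hcont.exists_forall_le htend
  refine ⟨m, fun s => ?_⟩
  have := hm (m - s)
  have e : z - (m - s) • x = z - m • x + s • x := by module
  simpa only [e] using this

lemma para_of_isoB (hB : IsoB X) : ParallelogramLaw X := by
  intro x z
  by_cases hx : x = 0
  · simp [hx]; ring
  obtain ⟨m, hm⟩ := exists_min x z hx
  have h := hm.symm hB
  have e1 : x + z = (1 + m) • x + (1:ℝ) • (z - m • x) := by module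
  have e2 : x - z = (1 - m) • x + (-1:ℝ) • (z - m • x) := by module
  have e3 : ‖z‖ ^ 2 = ‖m • x + (1:ℝ) • (z - m • x)‖ ^ 2 := by congr 2; module
  rw [e3, e1, e2, pyth hB h, pyth hB h, pyth hB h]
  ring

lemma isoB_of_unit (h : ∀ u v : X, ‖u‖ = 1 → ‖v‖ = 1 → ∀ t : ℝ,
    ‖u - v‖ ≤ ‖Real.exp t • u - Real.exp (-t) • v‖) : IsoB X := by
  -- first for arbitrary equal norms and plus sign
  have h1 : ∀ u v : X, ‖u‖ = ‖v‖ → ∀ t : ℝ, ‖u + v‖ ≤ ‖Real.exp t • u + Real.exp (-t) • v‖ := by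
    intro u v huv t
    by_cases hu : ‖u‖ = 0
    · have hv : ‖v‖ = 0 := huv ▸ hu
      rw [norm_eq_zero] at hu hv
      simp [hu, hv]
    have hv : ‖v‖ ≠ 0 := huv ▸ hu
    have := h (‖u‖⁻¹ • u) (-(‖u‖⁻¹ • v)) (by simp [norm_smul, hu])
      (by rw [huv]; simp [norm_smul, hv]) t
    have e1 : ‖u‖⁻¹ • u - -(‖u‖⁻¹ • v) = ‖u‖⁻¹ • (u + v) := by module
    have e2 : Real.exp t • ‖u‖⁻¹ • u - Real.exp (-t) • -(‖u‖⁻¹ • v)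
        = ‖u‖⁻¹ • (Real.exp t • u + Real.exp (-t) • v) := by module
    rw [e1, e2, norm_smul, norm_smul] at this
    exact le_of_mul_le_mul_left this (by simpa using hu)
  -- rational form
  have h2 : ∀ u v : X, ‖u‖ = ‖v‖ → ∀ s : ℝ, |s| < 1 →
      (1 - s ^ 2) * ‖u + v‖ ≤ ‖(u + v) + s • (u - v)‖ := by
    intro u v huv s hs
    rw [abs_lt] at hs
    have hp : 0 < 1 + s := by linarith
    have hm : 0 < 1 - s := by linarith
    have hk := h1 u v huv ((Real.log (1 + s) - Real.log (1 - s)) / 2)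
    obtain ⟨k, hkk⟩ : ∃ k, k = Real.exp ((Real.log (1 + s) + Real.log (1 - s)) / 2) := ⟨_, rfl⟩
    have hk0 : 0 < k := hkk ▸ Real.exp_pos _
    have hk2 : k * k = (1 + s) * (1 - s) := by
      rw [hkk, ← Real.exp_add, add_halves, Real.exp_add, Real.exp_log hp, Real.exp_log hm]
    have a1 : k * Real.exp ((Real.log (1 + s) - Real.log (1 - s)) / 2) = 1 + s := by
      rw [hkk, ← Real.exp_add]
      conv_rhs => rw [← Real.exp_log hp]
      congr 1; ring
    have a2 : k * Real.exp (-((Real.log (1 + s) - Real.log (1 - s)) / 2)) = 1 - s := by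
      rw [hkk, ← Real.exp_add]
      conv_rhs => rw [← Real.exp_log hm]
      congr 1; ring
    have a3 := mul_le_mul_of_nonneg_left hk hk0.le
    rw [← abs_of_pos hk0, ← Real.norm_eq_abs, ← norm_smul k (_ + _), ← norm_smul,
      smul_add k (_ • _), smul_smul, smul_smul] at a3
    rw [a1, a2] at a3
    have e : (u + v) + s • (u - v) = (1 + s) • u + (1 - s) • v := by module
    rw [e]
    refine le_trans ?_ a3
    rw [norm_smul, Real.norm_eq_abs, abs_of_pos hk0]
    apply mul_le_mul_of_nonneg_right _ (norm_nonneg _)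
    have : k ≤ 1 := by nlinarith [sq_nonneg s]
    nlinarith
  intro u v huv s
  obtain ⟨w, hw⟩ : ∃ w, w = u + v := ⟨_, rfl⟩
  obtain ⟨d, hd⟩ : ∃ d, d = u - v := ⟨_, rfl⟩
  have h3 : ∀ ε : ℝ, 0 < ε → ε < 1 → ε < 1 / (|s| + 1) → (1 - ε * s ^ 2) * ‖w‖ ≤ ‖w + s • d‖ := by
    intro ε h0 h1' h2'
    rw [lt_div_iff₀ (by positivity)] at h2'
    have := h2 u v huv (ε * s) (by rw [abs_mul, abs_of_pos h0]; nlinarith)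
    rw [← hw, ← hd] at this
    have e : w + (ε * s) • d = (1 - ε) • w + ε • (w + s • d) := by module
    have h5 := norm_add_le ((1 - ε) • w) (ε • (w + s • d))
    rw [← e, norm_smul, norm_smul, Real.norm_eq_abs, Real.norm_eq_abs, abs_of_pos h0,
      abs_of_pos (by linarith)] at h5
    refine le_of_mul_le_mul_left ?_ h0
    nlinarith
  rw [← hw, ← hd]
  have hlim : Filter.Tendsto (fun ε : ℝ => (1 - ε * s ^ 2) * ‖w‖) (nhdsWithin 0 (Set.Ioi 0))
      (nhds ‖w‖) := by
    have hc : Continuous (fun ε : ℝ => (1 - ε * s ^ 2) * ‖w‖) := by fun_prop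
    have := hc.tendsto 0
    simp only [zero_mul, sub_zero, one_mul] at this
    exact this.mono_left nhdsWithin_le_nhds
  refine le_of_tendsto hlim ?_
  have p1 : (0:ℝ) < 1 / (|s| + 1) := by positivity
  filter_upwards [self_mem_nhdsWithin, nhdsWithin_le_nhds (Iio_mem_nhds one_pos),
    nhdsWithin_le_nhds (Iio_mem_nhds p1)] with ε q1 q2 q3
  exact h3 ε q1 q2 q3

lemma unit_of_ineq {p : ℝ} (hp : 1 < p) (u v : X) (h : ∀ A : ℝ,
    ‖Real.exp ((2 - p) * A) • u - Real.exp (-((2 - p) * A)) • v‖ ≤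
      ‖Real.exp (p * A) • u - Real.exp (-(p * A)) • v‖) (t : ℝ) :
    ‖u - v‖ ≤ ‖Real.exp t • u - Real.exp (-t) • v‖ := by
  obtain ⟨F, hF⟩ : ∃ F : ℝ → ℝ, F = fun t => ‖Real.exp t • u - Real.exp (-t) • v‖ := ⟨_, rfl⟩
  have hp0 : p ≠ 0 := by linarith
  obtain ⟨q, hq⟩ : ∃ q, q = (2 - p) / p := ⟨_, rfl⟩
  have hq1 : |q| < 1 := by
    rw [hq, abs_lt, lt_div_iff₀ (by linarith), div_lt_iff₀ (by linarith)]
    constructor <;> linarith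
  have h1 : ∀ t, F (q * t) ≤ F t := by
    intro t
    have := h (t / p)
    rw [mul_div_cancel₀ _ hp0, show (2 - p) * (t / p) = q * t by rw [hq]; ring] at this
    rw [hF]; exact this
  have h2 : ∀ n : ℕ, F (q ^ n * t) ≤ F t := by
    intro n
    induction n with
    | zero => simp
    | succ n ih =>
      rw [pow_succ', mul_assoc]
      exact (h1 _).trans ih
  have hc : Continuous F := by rw [hF]; fun_prop
  have hl : Filter.Tendsto (fun n : ℕ => F (q ^ n * t)) Filter.atTop (nhds (F 0)) := by
    refine (hc.tendsto 0).comp ?_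
    have := (tendsto_pow_atTop_nhds_zero_of_abs_lt_one hq1).mul_const t
    rwa [zero_mul] at this
  have h3 : F 0 ≤ F t := le_of_tendsto' hl h2
  simpa [hF] using h3

lemma norm_exp_smul {u : X} (hu : ‖u‖ = 1) (A : ℝ) : ‖Real.exp A • u‖ = Real.exp A := by
  rw [norm_smul, hu, mul_one, Real.norm_eq_abs, abs_of_pos (Real.exp_pos _)]

lemma alpha_exp {p : ℝ} {u v : X} (hu : ‖u‖ = 1) (hv : ‖v‖ = 1) (A : ℝ) :
    alphaD p (Real.exp A • u) (Real.exp (-A) • v)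
      = ‖Real.exp (p * A) • u - Real.exp (-(p * A)) • v‖ := by
  unfold alphaD
  rw [norm_exp_smul hu, norm_exp_smul hv, ← Real.exp_mul, ← Real.exp_mul, smul_smul, smul_smul,
    ← Real.exp_add, ← Real.exp_add]
  ring_nf

lemma beta_exp {p : ℝ} {u v : X} (hu : ‖u‖ = 1) (hv : ‖v‖ = 1) (A : ℝ) :
    betaD p (Real.exp A • u) (Real.exp (-A) • v)
      = ‖Real.exp ((2 - p) * A) • u - Real.exp (-((2 - p) * A)) • v‖ := by
  unfold betaD
  rw [norm_exp_smul hu, norm_exp_smul hv, ← Real.exp_mul, ← Real.exp_mul, smul_smul, smul_smul,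
    ← Real.exp_add, ← Real.exp_add]
  ring_nf

lemma exp_smul_ne {u : X} (hu : ‖u‖ = 1) (A : ℝ) : Real.exp A • u ≠ 0 := by
  rw [← norm_ne_zero_iff, norm_exp_smul hu]
  exact (Real.exp_pos _).ne'

lemma sq_diff (hP : ParallelogramLaw X) (x y : X) (p : ℝ) :
    alphaD p x y ^ 2 - betaD p x y ^ 2 =
      ((‖x‖ ^ (p - 1)) ^ 2 - (‖y‖ ^ (p - 1)) ^ 2) * (‖x‖ ^ 2 - ‖y‖ ^ 2) := by
  let _ : InnerProductSpace ℝ X := InnerProductSpace.ofNorm ℝ (fun x y => by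
    have := hP x y
    nlinarith)
  unfold alphaD betaD
  rw [@norm_sub_sq_real, @norm_sub_sq_real]
  simp only [norm_smul, inner_smul_left, inner_smul_right, mul_pow, Real.norm_eq_abs, sq_abs]
  simp
  ring

end helpers

theorem stmt_18 {X : Type*} [NormedAddCommGroup X] [NormedSpace ℝ X] (p : ℝ) :
    (1 < p →
      (ParallelogramLaw X ↔
        ∀ x y : X, x ≠ 0 → y ≠ 0 → betaD p x y ≤ alphaD p x y)) ∧
    (p < 1 →
      (ParallelogramLaw X ↔
        ∀ x y : X, x ≠ 0 → y ≠ 0 → alphaD p x y ≤ betaD p x y)) := by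
  refine ⟨fun hp => ⟨fun hP x y hx hy => ?_, fun h => ?_⟩,
    fun hp => ⟨fun hP x y hx hy => ?_, fun h => ?_⟩⟩
  · have hd := sq_diff hP x y p
    refine le_of_pow_le_pow_left₀ two_ne_zero (norm_nonneg _) ?_
    have hx' := norm_pos_iff.mpr hx
    have hy' := norm_pos_iff.mpr hy
    suffices 0 ≤ ((‖x‖ ^ (p - 1)) ^ 2 - (‖y‖ ^ (p - 1)) ^ 2) * (‖x‖ ^ 2 - ‖y‖ ^ 2) by linarith
    rcases le_total ‖x‖ ‖y‖ with hl | hl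
    · have := Real.rpow_le_rpow hx'.le hl (by linarith : 0 ≤ p - 1)
      have := pow_le_pow_left₀ (by positivity) this 2
      have := pow_le_pow_left₀ hx'.le hl 2
      apply mul_nonneg_of_nonpos_of_nonpos <;> linarith
    · have := Real.rpow_le_rpow hy'.le hl (by linarith : 0 ≤ p - 1)
      have := pow_le_pow_left₀ (by positivity) this 2
      have := pow_le_pow_left₀ hy'.le hl 2
      apply mul_nonneg <;> linarith
  · refine para_of_isoB (isoB_of_unit fun u v hu hv => unit_of_ineq hp u v fun A => ?_)
    rw [← beta_exp (p := p) hu hv, ← alpha_exp (p := p) hu hv]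
    exact h _ _ (exp_smul_ne hu _) (exp_smul_ne hv _)
  · have hd := sq_diff hP x y p
    refine le_of_pow_le_pow_left₀ two_ne_zero (norm_nonneg _) ?_
    have hx' := norm_pos_iff.mpr hx
    have hy' := norm_pos_iff.mpr hy
    suffices ((‖x‖ ^ (p - 1)) ^ 2 - (‖y‖ ^ (p - 1)) ^ 2) * (‖x‖ ^ 2 - ‖y‖ ^ 2) ≤ 0 by linarith
    rcases le_total ‖x‖ ‖y‖ with hl | hl
    · have := Real.rpow_le_rpow_of_nonpos hx' hl (by linarith : p - 1 ≤ 0)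
      have := pow_le_pow_left₀ (by positivity) this 2
      have := pow_le_pow_left₀ hx'.le hl 2
      apply mul_nonpos_of_nonneg_of_nonpos <;> linarith
    · have := Real.rpow_le_rpow_of_nonpos hy' hl (by linarith : p - 1 ≤ 0)
      have := pow_le_pow_left₀ (by positivity) this 2
      have := pow_le_pow_left₀ hy'.le hl 2
      apply mul_nonpos_of_nonpos_of_nonneg <;> linarith
  · refine para_of_isoB (isoB_of_unit fun u v hu hv =>
      unit_of_ineq (p := 2 - p) (by linarith) u v fun A => ?_)
    rw [sub_sub_cancel, ← beta_exp (p := p) hu hv, ← alpha_exp (p := p) hu hv]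
    exact h _ _ (exp_smul_ne hu _) (exp_smul_ne hv _)
end

section
/- Let X be a real normed linear space and let p be a real number with p ≠ 1. Then the norm of X satisfies the parallelogram law (equivalently, X is an inner product space) if and only if for all nonzero x, y ∈ X, α_p[x,y] = √( (‖x‖^(p+1) − ‖y‖^(p+1))(‖x‖^(p−1) − ‖y‖^(p−1)) + ‖x‖^(p−1)‖y‖^(p−1)‖x − y‖² ). -/
theorem aux_unique {X : Type*} [NormedAddCommGroup X] [NormedSpace ℝ X]
    (u v : X) (α β : ℝ) (hu : u ≠ 0)
    (h1 : ∀ s t : ℝ, ‖s • u + t • v‖ = ‖s • u - t • v‖)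
    (h2 : ∀ s t : ℝ, ‖s • u + t • (α • u + β • v)‖ = ‖s • u - t • (α • u + β • v)‖) :
    α = 0 := by
  by_contra hα
  have hper : ∀ s : ℝ, ‖(s + 2 * α) • u - β • v‖ = ‖s • u - β • v‖ := by
    intro s
    have e1 := h2 (s + α) 1
    have e2 := h1 (s + 2 * α) β
    have r1 : (s + α) • u + (1 : ℝ) • (α • u + β • v) = (s + 2 * α) • u + β • v := by module
    have r2 : (s + α) • u - (1 : ℝ) • (α • u + β • v) = s • u - β • v := by module
    rw [r1, r2] at e1
    rw [← e2, e1]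
  have hn : ∀ n : ℕ, ‖((n : ℝ) * (2 * α)) • u - β • v‖ = ‖β • v‖ := by
    intro n
    induction n with
    | zero => simp
    | succ k ih =>
      rw [← ih, ← hper ((k : ℝ) * (2 * α))]
      congr 3
      push_cast; ring
  have hpos : 0 < |2 * α| * ‖u‖ := by
    have : 0 < ‖u‖ := norm_pos_iff.mpr hu
    have : 0 < |2 * α| := abs_pos.mpr (by simpa using hα)
    positivity
  obtain ⟨n, hn'⟩ := exists_nat_gt (2 * ‖β • v‖ / (|2 * α| * ‖u‖))
  rw [div_lt_iff₀ hpos] at hn'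
  have h3 := norm_sub_norm_le (((n : ℝ) * (2 * α)) • u) (β • v)
  rw [hn n, norm_smul, norm_mul, Real.norm_eq_abs, Real.norm_eq_abs, Nat.abs_cast] at h3
  nlinarith

/-- Ficken's condition implies homogeneity of isosceles orthogonality. -/
theorem aux_hom {X : Type*} [NormedAddCommGroup X] [NormedSpace ℝ X]
    (F : ∀ u v : X, ‖u‖ = ‖v‖ → ∀ a b : ℝ, ‖a • u + b • v‖ = ‖b • u + a • v‖)
    (x y : X) (h : ‖x + y‖ = ‖x - y‖) (s t : ℝ) : ‖s • x + t • y‖ = ‖s • x - t • y‖ := by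
  have := F _ _ h ((s + t) / 2) ((s - t) / 2)
  convert this using 2 <;> module

theorem aux_unit {X : Type*} [NormedAddCommGroup X] [NormedSpace ℝ X]
    (F : ∀ u v : X, ‖u‖ = ‖v‖ → ∀ a b : ℝ, ‖a • u + b • v‖ = ‖b • u + a • v‖)
    (x z : X) (hx : ‖x‖ = 1) (hz : ‖z‖ = 1) (h : ‖x + z‖ = ‖x - z‖) (a b : ℝ)
    (hu : ‖a • x + b • z‖ = 1) : a ^ 2 + b ^ 2 = 1 := by
  by_cases hb : b = 0
  · subst hb
    simp [norm_smul, hx] at hu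
    rw [← sq_abs a, hu]; norm_num
  by_cases ha : a = 0
  · subst ha
    simp [norm_smul, hz] at hu
    rw [← sq_abs b, hu]; norm_num
  have hD : a ^ 2 + b ^ 2 ≠ 0 := by positivity
  have H := aux_hom F x z h
  have Fx := F x z (by rw [hx, hz])
  have o1 : ‖(a • x + b • z) + ((-b) • x + a • z)‖ = ‖(a • x + b • z) - ((-b) • x + a • z)‖ := by
    have e1 : (a • x + b • z) + ((-b) • x + a • z) = (a - b) • x + (a + b) • z := by module
    have e2 : (a • x + b • z) - ((-b) • x + a • z) = (a + b) • x - (a - b) • z := by module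
    rw [e1, e2, ← H, Fx]
  have o2 : ‖(a • x + b • z) + (x - a • (a • x + b • z))‖
      = ‖(a • x + b • z) - (x - a • (a • x + b • z))‖ := by
    have Fu := F x (a • x + b • z) (by rw [hx, hu])
    have e1 : (a • x + b • z) + (x - a • (a • x + b • z))
      = (1 : ℝ) • x + (1 - a) • (a • x + b • z) := by module
    have e2 : (a • x + b • z) - (x - a • (a • x + b • z))
      = (-1 : ℝ) • x + (1 + a) • (a • x + b • z) := by module
    rw [e1, e2, Fu, Fu (-1)]
    have e3 : (1 - a) • x + (1 : ℝ) • (a • x + b • z) = (1 : ℝ) • x + b • z := by module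
    have e4 : (1 + a) • x + (-1 : ℝ) • (a • x + b • z) = (1 : ℝ) • x - b • z := by module
    rw [e3, e4, H]
  have key : x - a • (a • x + b • z) = (a / (a ^ 2 + b ^ 2) - a) • (a • x + b • z)
      + (-b / (a ^ 2 + b ^ 2)) • ((-b) • x + a • z) := by
    match_scalars <;> field_simp <;> ring
  rw [key] at o2
  have hne : a • x + b • z ≠ 0 := by
    intro h0; rw [h0] at hu; simp at hu
  have := aux_unique _ _ _ _ hne (aux_hom F _ _ o1) (aux_hom F _ _ o2)
  field_simp at this
  have h3 : a * (1 - (a ^ 2 + b ^ 2)) = 0 := by linarith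
  rcases mul_eq_zero.mp h3 with h4 | h4
  · exact absurd h4 ha
  · linarith

theorem aux_sq {X : Type*} [NormedAddCommGroup X] [NormedSpace ℝ X]
    (F : ∀ u v : X, ‖u‖ = ‖v‖ → ∀ a b : ℝ, ‖a • u + b • v‖ = ‖b • u + a • v‖)
    (x z : X) (hx : ‖x‖ = 1) (hz : ‖z‖ = 1) (h : ‖x + z‖ = ‖x - z‖) (a b : ℝ) :
    ‖a • x + b • z‖ ^ 2 = a ^ 2 + b ^ 2 := by
  by_cases h0 : a • x + b • z = 0
  · have e1 : ‖a • x + b • z‖ = 0 := by rw [h0]; simp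
    have e2 : ‖a • x - b • z‖ = 0 := by rw [← aux_hom F x z h]; exact e1
    have e3 : a • x - b • z = 0 := norm_eq_zero.mp e2
    have e4 : (2 * a) • x = 0 := by
      have : (2 * a) • x = (a • x + b • z) + (a • x - b • z) := by module
      rw [this, h0, e3, add_zero]
    have e5 : (2 * b) • z = 0 := by
      have : (2 * b) • z = (a • x + b • z) - (a • x - b • z) := by module
      rw [this, h0, e3, sub_zero]
    have hx0 : x ≠ 0 := by rintro rfl; simp at hx
    have hz0 : z ≠ 0 := by rintro rfl; simp at hz
    have ha : a = 0 := by simpa [hx0] using e4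
    have hb : b = 0 := by simpa [hz0] using e5
    subst ha hb; simp
  · have hr : ‖a • x + b • z‖ ≠ 0 := norm_ne_zero_iff.mpr h0
    set r := ‖a • x + b • z‖ with hrdef
    have := aux_unit F x z hx hz h (r⁻¹ * a) (r⁻¹ * b) (by
      rw [mul_smul, mul_smul, ← smul_add, norm_smul, ← hrdef, norm_inv, Real.norm_eq_abs,
        abs_of_nonneg (norm_nonneg _)]
      exact inv_mul_cancel₀ hr)
    field_simp at this
    linarith

theorem aux_exists {X : Type*} [NormedAddCommGroup X] [NormedSpace ℝ X]
    (F : ∀ u v : X, ‖u‖ = ‖v‖ → ∀ a b : ℝ, ‖a • u + b • v‖ = ‖b • u + a • v‖)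
    (x y : X) (hx : ‖x‖ = 1) : ∃ c : ℝ, ‖x + (y - c • x)‖ = ‖x - (y - c • x)‖ := by
  obtain ⟨K, hK⟩ : ∃ K : ℝ, K = ‖y‖ + 1 := ⟨_, rfl⟩
  have hK0 : 0 < K := by have := norm_nonneg y; linarith
  have hc : Continuous (fun c : ℝ => ‖K • x + (y - c • x)‖ - ‖K • x - (y - c • x)‖) := by
    fun_prop
  have hn : ‖(2 * K) • x‖ = 2 * K := by
    rw [norm_smul, hx, Real.norm_eq_abs, abs_of_pos (by linarith), mul_one]
  have h1 : ‖K • x + (y - K • x)‖ - ‖K • x - (y - K • x)‖ ≤ 0 := by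
    have e1 : K • x + (y - K • x) = y := by module
    have e2 : K • x - (y - K • x) = (2 * K) • x - y := by module
    have := norm_sub_norm_le ((2 * K) • x) y
    rw [e1, e2]; linarith
  have h2 : 0 ≤ ‖K • x + (y - (-K) • x)‖ - ‖K • x - (y - (-K) • x)‖ := by
    have e1 : K • x + (y - (-K) • x) = (2 * K) • x - (-y) := by module
    have e2 : K • x - (y - (-K) • x) = -y := by module
    have := norm_sub_norm_le ((2 * K) • x) (-y)
    rw [e1, e2]; rw [norm_neg] at *; linarith
  obtain ⟨c, hc0⟩ := mem_range_of_exists_le_of_exists_ge hc ⟨K, h1⟩ ⟨-K, h2⟩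
  have h3 := aux_hom F (K • x) (y - c • x) (sub_eq_zero.mp hc0) K⁻¹ 1
  rw [smul_smul, inv_mul_cancel₀ hK0.ne', one_smul, one_smul] at h3
  exact ⟨c, h3⟩

theorem aux_par {X : Type*} [NormedAddCommGroup X] [NormedSpace ℝ X]
    (F : ∀ u v : X, ‖u‖ = ‖v‖ → ∀ a b : ℝ, ‖a • u + b • v‖ = ‖b • u + a • v‖) :
    ParallelogramLaw X := by
  intro x y
  by_cases hx : x = 0
  · subst hx; simp; ring
  have hxn : ‖x‖ ≠ 0 := norm_ne_zero_iff.mpr hx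
  obtain ⟨e, he, hxe⟩ : ∃ e : X, ‖e‖ = 1 ∧ x = ‖x‖ • e :=
    ⟨‖x‖⁻¹ • x, by rw [norm_smul, norm_inv, norm_norm, inv_mul_cancel₀ hxn],
      by rw [smul_smul, mul_inv_cancel₀ hxn, one_smul]⟩
  obtain ⟨c, hc⟩ := aux_exists F e y he
  generalize ‖x‖ = r at hxe hxn
  subst hxe
  by_cases hz : y - c • e = 0
  · have : y = c • e := sub_eq_zero.mp hz
    subst this
    rw [← add_smul, ← sub_smul]
    simp only [norm_smul, he, mul_one, Real.norm_eq_abs, sq_abs]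
    ring
  have hzn : ‖y - c • e‖ ≠ 0 := norm_ne_zero_iff.mpr hz
  have ho := aux_hom F _ _ hc 1 (‖y - c • e‖⁻¹)
  rw [one_smul] at ho
  have hf : ‖‖y - c • e‖⁻¹ • (y - c • e)‖ = 1 := by
    rw [norm_smul, norm_inv, norm_norm, inv_mul_cancel₀ hzn]
  have hy : y = c • e + ‖y - c • e‖ • (‖y - c • e‖⁻¹ • (y - c • e)) := by
    rw [smul_smul, mul_inv_cancel₀ hzn, one_smul]; abel
  generalize ‖y - c • e‖⁻¹ • (y - c • e) = f at *
  generalize ‖y - c • e‖ = d at *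
  subst hy
  have S := aux_sq F e f he hf ho
  have e1 : r • e + (c • e + d • f) = (r + c) • e + d • f := by module
  have e2 : r • e - (c • e + d • f) = (r - c) • e + (-d) • f := by module
  rw [e1, e2, S, S, S]
  ring

/-- From the invariance under a power to the symmetric one. -/
theorem aux_pow_s19 (G : ℝ → ℝ) (hG : ContinuousAt G 1) (p : ℝ) (hp : p ≠ 1)
    (h : ∀ t, 0 < t → G (t ^ p) = G t) (t : ℝ) (ht : 0 < t) : G t = G t⁻¹ := by
  by_cases hp1 : p = -1
  · subst hp1; rw [← h t ht, Real.rpow_neg_one]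
  have main : ∀ q : ℝ, |q| < 1 → (∀ t, 0 < t → G (t ^ q) = G t) → ∀ t, 0 < t → G t = G 1 := by
    intro q hq hqG t ht
    have hn : ∀ n : ℕ, G (t ^ (q ^ n)) = G t := by
      intro n
      induction n with
      | zero => simp
      | succ k ih =>
        rw [← ih, pow_succ, Real.rpow_mul ht.le, hqG _ (Real.rpow_pos_of_pos ht _)]
    have l1 : Filter.Tendsto (fun n : ℕ => t ^ (q ^ n)) Filter.atTop (nhds 1) := by
      have := (tendsto_pow_atTop_nhds_zero_of_abs_lt_one hq)
      have h2 := (Real.continuousAt_const_rpow (a := t) (b := 0) ht.ne').tendsto.comp this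
      simpa [Function.comp_def] using h2
    have l2 := hG.tendsto.comp l1
    have l3 : (G ∘ fun n : ℕ => t ^ (q ^ n)) = fun _ => G t := funext hn
    rw [l3] at l2
    exact tendsto_nhds_unique tendsto_const_nhds l2
  have hc : ∀ t, 0 < t → G t = G 1 := by
    rcases lt_or_ge |p| 1 with hlt | hge
    · exact main p hlt h
    · have hgt : 1 < |p| := lt_of_le_of_ne hge (by
        intro h; rcases eq_or_eq_neg_of_abs_eq h.symm with h | h
        · exact hp h
        · exact hp1 h)
      have hp0 : p ≠ 0 := by rintro rfl; simp at hgt; linarith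
      apply main p⁻¹
      · rw [abs_inv]; exact inv_lt_one_of_one_lt₀ hgt
      · intro t ht
        rw [← h _ (Real.rpow_pos_of_pos ht _), ← Real.rpow_mul ht.le, inv_mul_cancel₀ hp0,
          Real.rpow_one]
  rw [hc t ht, hc _ (inv_pos.mpr ht)]

theorem aux_unitF {X : Type*} [NormedAddCommGroup X] [NormedSpace ℝ X]
    (p : ℝ) (hp : p ≠ 1) (h : ∀ x y : X, x ≠ 0 → y ≠ 0 →
        alphaD p x y =
          Real.sqrt ((‖x‖ ^ (p + 1) - ‖y‖ ^ (p + 1)) * (‖x‖ ^ (p - 1) - ‖y‖ ^ (p - 1)) +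
            ‖x‖ ^ (p - 1) * ‖y‖ ^ (p - 1) * ‖x - y‖ ^ 2))
    (u v : X) (hu : ‖u‖ = 1) (hv : ‖v‖ = 1) (t : ℝ) (ht : 0 < t) :
    ‖t • u - v‖ = ‖u - t • v‖ := by
  have hu0 : u ≠ 0 := by rintro rfl; simp at hu
  have hv0 : v ≠ 0 := by rintro rfl; simp at hv
  have key := aux_pow_s19 (fun t => (t ^ 2 + 1 - ‖t • u - v‖ ^ 2) / t)
    (by
      apply ContinuousAt.div
      · fun_prop
      · fun_prop
      · norm_num) p hp ?_ t ht
  · have e : t⁻¹ • u - v = t⁻¹ • (u - t • v) := by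
      rw [smul_sub, smul_smul, inv_mul_cancel₀ ht.ne', one_smul]
    simp only [e, norm_smul, norm_inv, Real.norm_eq_abs, abs_of_pos ht] at key
    field_simp at key
    have : ‖t • u - v‖ ^ 2 = ‖u - t • v‖ ^ 2 := by linarith
    exact (sq_eq_sq₀ (norm_nonneg _) (norm_nonneg _)).mp this
  · intro t ht
    have := h (t • u) v (smul_ne_zero ht.ne' hu0) hv0
    unfold alphaD at this
    have hn : ‖t • u‖ = t := by rw [norm_smul, hu, Real.norm_eq_abs, abs_of_pos ht, mul_one]
    rw [hn, hv] at this
    simp only [Real.one_rpow, one_smul, smul_smul, mul_one] at this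
    have q1 : t ^ (p - 1) * t = t ^ p := by
      rw [← Real.rpow_add_one ht.ne']; simp
    have q2 : t ^ (p + 1) = t ^ p * t := Real.rpow_add_one ht.ne' _
    rw [q1, q2, ← q1] at this
    rw [← q1]
    have hA : 0 < t ^ (p - 1) := Real.rpow_pos_of_pos ht _
    generalize t ^ (p - 1) = A at *
    have hlow : (t - 1) ^ 2 ≤ ‖t • u - v‖ ^ 2 := by
      have := abs_norm_sub_norm_le (t • u) v
      rw [hn, hv] at this
      rw [← sq_abs (t - 1)]
      gcongr
    have hnn : 0 ≤ (A * t * t - 1) * (A - 1) + A * ‖t • u - v‖ ^ 2 := by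
      nlinarith [sq_nonneg (A * t - 1), mul_le_mul_of_nonneg_left hlow hA.le]
    have h2 := congrArg (· ^ 2) this
    simp only [Real.sq_sqrt hnn] at h2
    rw [h2]
    field_simp
    ring

theorem aux_F {X : Type*} [NormedAddCommGroup X] [NormedSpace ℝ X]
    (U : ∀ u v : X, ‖u‖ = 1 → ‖v‖ = 1 → ∀ t : ℝ, 0 < t → ‖t • u - v‖ = ‖u - t • v‖) :
    ∀ u v : X, ‖u‖ = ‖v‖ → ∀ a b : ℝ, ‖a • u + b • v‖ = ‖b • u + a • v‖ := by
  have U1 : ∀ u v : X, ‖u‖ = 1 → ‖v‖ = 1 → ∀ t : ℝ, ‖t • u + v‖ = ‖u + t • v‖ := by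
    intro u v hu hv t
    rcases lt_trichotomy t 0 with ht | rfl | ht
    · have := U u v hu hv (-t) (by linarith)
      have e1 : (-t) • u - v = -(t • u + v) := by module
      have e2 : u - (-t) • v = u + t • v := by module
      rwa [e1, e2, norm_neg] at this
    · simp [hu, hv]
    · have := U u (-v) hu (by simpa using hv) t ht
      simpa using this
  have U2 : ∀ u v : X, ‖u‖ = 1 → ‖v‖ = 1 → ∀ a b : ℝ, ‖a • u + b • v‖ = ‖b • u + a • v‖ := by
    intro u v hu hv a b
    by_cases hb : b = 0
    · subst hb; simp [norm_smul, hu, hv]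
    · have := congrArg (‖b‖ * ·) (U1 u v hu hv (a / b))
      simp only [← norm_smul, smul_add, smul_smul, mul_div_cancel₀ a hb] at this
      exact this
  intro u v huv a b
  by_cases hu : ‖u‖ = 0
  · have hv : ‖v‖ = 0 := by rw [← huv, hu]
    rw [norm_eq_zero.mp hu, norm_eq_zero.mp hv]; simp
  · have hv : ‖v‖ ≠ 0 := by rwa [← huv]
    have := U2 (‖u‖⁻¹ • u) (‖u‖⁻¹ • v)
      (by rw [norm_smul, norm_inv, norm_norm, inv_mul_cancel₀ hu])
      (by rw [huv, norm_smul, norm_inv, norm_norm, inv_mul_cancel₀ hv]) (‖u‖ * a) (‖u‖ * b)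
    have e : ∀ c : ℝ, ‖u‖ * c * ‖u‖⁻¹ = c := fun c => by field_simp
    simpa only [smul_smul, e] using this

theorem aux_forward {X : Type*} [NormedAddCommGroup X] [NormedSpace ℝ X]
    (p : ℝ) (h : ParallelogramLaw X) (x y : X) (hx : x ≠ 0) (hy : y ≠ 0) :
    alphaD p x y =
          Real.sqrt ((‖x‖ ^ (p + 1) - ‖y‖ ^ (p + 1)) * (‖x‖ ^ (p - 1) - ‖y‖ ^ (p - 1)) +
            ‖x‖ ^ (p - 1) * ‖y‖ ^ (p - 1) * ‖x - y‖ ^ 2) := by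
  let _ : InnerProductSpace ℝ X := InnerProductSpace.ofNorm ℝ (fun x y => by
    have := h x y
    simp only [← sq]; linarith)
  have hx' := norm_pos_iff.mpr hx
  have hy' := norm_pos_iff.mpr hy
  have q : ∀ r : ℝ, 0 < r → r ^ (p + 1) = r ^ (p - 1) * r ^ 2 := fun r hr => by
    rw [← Real.rpow_natCast, ← Real.rpow_add hr]; congr 1; push_cast; ring
  unfold alphaD
  rw [← Real.sqrt_sq (norm_nonneg (‖x‖ ^ (p - 1) • x - ‖y‖ ^ (p - 1) • y))]
  congr 1
  rw [q _ hx', q _ hy']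
  have hA := Real.rpow_pos_of_pos hx' (p - 1)
  have hB := Real.rpow_pos_of_pos hy' (p - 1)
  generalize ‖x‖ ^ (p - 1) = A at *
  generalize ‖y‖ ^ (p - 1) = B at *
  rw [@norm_sub_sq_real X, @norm_sub_sq_real X, real_inner_smul_left, real_inner_smul_right,
    norm_smul, norm_smul, Real.norm_eq_abs, Real.norm_eq_abs, abs_of_pos hA, abs_of_pos hB]
  ring

theorem stmt_19 {X : Type*} [NormedAddCommGroup X] [NormedSpace ℝ X]
    (p : ℝ) (hp : p ≠ 1) :
    ParallelogramLaw X ↔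
      ∀ x y : X, x ≠ 0 → y ≠ 0 →
        alphaD p x y =
          Real.sqrt ((‖x‖ ^ (p + 1) - ‖y‖ ^ (p + 1)) * (‖x‖ ^ (p - 1) - ‖y‖ ^ (p - 1)) +
            ‖x‖ ^ (p - 1) * ‖y‖ ^ (p - 1) * ‖x - y‖ ^ 2) :=
  ⟨fun h => aux_forward p h, fun h => aux_par (aux_F (aux_unitF p hp h))⟩
end
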